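/- Let ε > 0 be fixed, let p > 2 be a fixed prime, and let α₁, α₂, α₃ be fixed integers coprime to p with p > s_p(α₁,α₂,α₃). Let Φ : ℝ → ℝ be a nonnegative Schwartz-class function. For each n ∈ ℕ set q := pⁿ and let N = N(n) be any real number with N ≥ q^{1/2+ε}. Then, as n → ∞, the quantity (q/N³) · Σ_{(x₁,x₂,x₃) ∈ ℤ³, gcd(x₁x₂x₃,p)=1, α₁x₁²+α₂x₂²+α₃x₃² ≡ 0 (mod q)} Φ(x₁/N)Φ(x₂/N)Φ(x₃/N) converges to Φ̂(0)³ · C_p(α₁,α₂,α₃). -/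

import Mathlib

open Filter MeasureTheory
open scoped FourierTransform SchwartzMap

section ExponentialSums

open Finset

/-- If the phase `f` varies linearly along a family of permutations of `S`, only the points of
`S` at which its slope `L` vanishes contribute to the exponential sum. -/
lemma sum_addChar_eq_sum_filter {R ι : Type*} [CommRing R] [Fintype R] [DecidableEq R]
    {ψ : AddChar R ℂ} (hψ : ψ.IsPrimitive) (S : Finset ι) (f L : ι → R) (σ : R → ι → ι)
    (hmaps : ∀ t, ∀ a ∈ S, σ t a ∈ S) (hinj : ∀ t, Set.InjOn (σ t) S)
    (hf : ∀ t, ∀ a ∈ S, f (σ t a) = f a + t * L a) :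
    ∑ a ∈ S, ψ (f a) = ∑ a ∈ S with L a = 0, ψ (f a) := by
  have hcard : (Fintype.card R : ℂ) ≠ 0 := Nat.cast_ne_zero.mpr Fintype.card_ne_zero
  have hshift (t : R) : ∑ a ∈ S, ψ (f a) = ∑ a ∈ S, ψ (f a) * ψ (t * L a) := by
    have hsurj : Set.SurjOn (σ t) S S :=
      surjOn_of_injOn_of_card_le (σ t) (hmaps t) (hinj t) le_rfl
    rw [← Finset.sum_nbij (σ t) (hmaps t) (hinj t) hsurj (fun a _ => rfl)]
    refine Finset.sum_congr rfl fun a ha => ?_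
    rw [hf t a ha, AddChar.map_add_eq_mul]
  have hsum : (Fintype.card R : ℂ) * ∑ a ∈ S, ψ (f a)
      = Fintype.card R * ∑ a ∈ S with L a = 0, ψ (f a) := by
    calc (Fintype.card R : ℂ) * ∑ a ∈ S, ψ (f a) = ∑ t : R, ∑ a ∈ S, ψ (f a) := by simp
      _ = ∑ t : R, ∑ a ∈ S, ψ (f a) * ψ (t * L a) := Finset.sum_congr rfl fun t _ => hshift t
      _ = ∑ a ∈ S, ψ (f a) * ∑ t : R, ψ (t * L a) := by
          rw [Finset.sum_comm]; simp_rw [Finset.mul_sum]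
      _ = _ := by
          simp_rw [AddChar.sum_mulShift _ hψ]
          rw [Finset.sum_filter, Finset.mul_sum]
          refine Finset.sum_congr rfl fun a _ => ?_
          split_ifs <;> simp [mul_comm]
  exact mul_left_cancel₀ hcard hsum

open scoped Classical in
/-- The zeros of the diagonal form `α₁x₁² + α₂x₂² + α₃x₃²` all of whose coordinates are units. -/
noncomputable def unitZeros {R : Type*} [CommRing R] [Fintype R] (α₁ α₂ α₃ : R) :
    Finset (R × R × R) :=
  {a | IsUnit a.1 ∧ IsUnit a.2.1 ∧ IsUnit a.2.2 ∧
    α₁ * a.1 ^ 2 + α₂ * a.2.1 ^ 2 + α₃ * a.2.2 ^ 2 = 0}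

lemma mem_unitZeros {R : Type*} [CommRing R] [Fintype R] {α₁ α₂ α₃ : R} {a : R × R × R} :
    a ∈ unitZeros α₁ α₂ α₃ ↔ IsUnit a.1 ∧ IsUnit a.2.1 ∧ IsUnit a.2.2 ∧
      α₁ * a.1 ^ 2 + α₂ * a.2.1 ^ 2 + α₃ * a.2.2 ^ 2 = 0 := by
  simp [unitZeros]

lemma isUnit_add_mul_of_sq_eq_zero {R : Type*} [CommRing R] {c x y : R} (hc : c * c = 0)
    (hx : IsUnit x) : IsUnit (x + c * y) := by
  have hnil : IsNilpotent (c * y) := ⟨2, by linear_combination y ^ 2 * hc⟩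
  exact hnil.isUnit_add_left_of_commute hx (Commute.all _ _)

/-- The exponential sum over the unit zeros localizes at the zeros `a` at which the frequency `m`
is, up to a square-zero scalar `c` and a nilpotent scalar `d`, normal to the cone. -/
lemma sum_unitZeros_eq_sum_filter {R : Type*} [CommRing R] [Fintype R] [DecidableEq R]
    {ψ : AddChar R ℂ} (hψ : ψ.IsPrimitive) (α₁ α₂ α₃ m₁ m₂ m₃ : R) {c d : R} (hc : c * c = 0)
    (hd : IsNilpotent d) :
    ∑ a ∈ unitZeros α₁ α₂ α₃, ψ (m₁ * a.1 + m₂ * a.2.1 + m₃ * a.2.2) =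
      ∑ a ∈ unitZeros α₁ α₂ α₃ with c * (m₁ * (α₂ * a.2.1) - m₂ * (α₁ * a.1)) = 0 ∧
        c * (m₁ * (α₃ * a.2.2) - m₃ * (α₁ * a.1)) = 0 ∧
        d * (m₁ * a.1 + m₂ * a.2.1 + m₃ * a.2.2) = 0,
        ψ (m₁ * a.1 + m₂ * a.2.1 + m₃ * a.2.2) := by
  rw [sum_addChar_eq_sum_filter hψ (unitZeros α₁ α₂ α₃)
      (fun a => m₁ * a.1 + m₂ * a.2.1 + m₃ * a.2.2)
      (fun a => c * (m₁ * (α₂ * a.2.1) - m₂ * (α₁ * a.1)))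
      (fun t a => (a.1 + c * (t * α₂ * a.2.1), a.2.1 + c * (-t * α₁ * a.1), a.2.2)),
    sum_addChar_eq_sum_filter hψ _
      (fun a => m₁ * a.1 + m₂ * a.2.1 + m₃ * a.2.2)
      (fun a => c * (m₁ * (α₃ * a.2.2) - m₃ * (α₁ * a.1)))
      (fun t a => (a.1 + c * (t * α₃ * a.2.2), a.2.1, a.2.2 + c * (-t * α₁ * a.1))),
    sum_addChar_eq_sum_filter hψ _
      (fun a => m₁ * a.1 + m₂ * a.2.1 + m₃ * a.2.2)
      (fun a => d * (m₁ * a.1 + m₂ * a.2.1 + m₃ * a.2.2))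
      (fun t a => ((1 + t * d) * a.1, (1 + t * d) * a.2.1, (1 + t * d) * a.2.2))]
  · simp only [Finset.filter_filter, and_assoc]
  · intro t a ha
    have hu : IsUnit (1 + t * d) :=
      ((Commute.all t d).isNilpotent_mul_left hd).isUnit_one_add
    simp only [Finset.mem_filter, mem_unitZeros] at ha ⊢
    obtain ⟨⟨⟨ha1, ha2, ha3, ha⟩, h12⟩, h13⟩ := ha
    refine ⟨⟨⟨hu.mul ha1, hu.mul ha2, hu.mul ha3, ?_⟩, ?_⟩, ?_⟩
    · linear_combination (1 + t * d) ^ 2 * ha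
    · linear_combination (1 + t * d) * h12
    · linear_combination (1 + t * d) * h13
  · intro t a _ b _ hab
    have hu : IsUnit (1 + t * d) :=
      ((Commute.all t d).isNilpotent_mul_left hd).isUnit_one_add
    simp only [Prod.mk.injEq, hu.mul_right_inj] at hab
    exact Prod.ext hab.1 (Prod.ext hab.2.1 hab.2.2)
  · intro t a _
    ring
  · intro t a ha
    simp only [Finset.mem_filter, mem_unitZeros] at ha ⊢
    obtain ⟨⟨ha1, ha2, ha3, ha⟩, h12⟩ := ha
    refine ⟨⟨isUnit_add_mul_of_sq_eq_zero hc ha1, ha2, isUnit_add_mul_of_sq_eq_zero hc ha3, ?_⟩, ?_⟩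
    · linear_combination ha + (α₁ * (t * α₃ * a.2.2) ^ 2 + α₃ * (t * α₁ * a.1) ^ 2) * hc
    · linear_combination h12 - m₂ * α₁ * (t * α₃ * a.2.2) * hc
  · intro t a _ b _ hab
    simp only [Prod.mk.injEq] at hab
    obtain ⟨h1, h2, h3⟩ := hab
    refine Prod.ext ?_ (Prod.ext h2 ?_)
    · linear_combination h1 - c * t * α₃ * h3 - t ^ 2 * α₁ * α₃ * (a.1 - b.1) * hc
    · linear_combination h3 + c * t * α₁ * h1 - t ^ 2 * α₁ * α₃ * (a.2.2 - b.2.2) * hc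
  · intro t a _
    ring
  · intro t a ha
    simp only [mem_unitZeros] at ha ⊢
    obtain ⟨ha1, ha2, ha3, ha⟩ := ha
    refine ⟨isUnit_add_mul_of_sq_eq_zero hc ha1, isUnit_add_mul_of_sq_eq_zero hc ha2, ha3, ?_⟩
    linear_combination ha + (α₁ * (t * α₂ * a.2.1) ^ 2 + α₂ * (t * α₁ * a.1) ^ 2) * hc
  · intro t a _ b _ hab
    simp only [Prod.mk.injEq] at hab
    obtain ⟨h1, h2, h3⟩ := hab
    refine Prod.ext ?_ (Prod.ext ?_ h3)
    · linear_combination h1 - c * t * α₂ * h2 - t ^ 2 * α₁ * α₂ * (a.1 - b.1) * hc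
    · linear_combination h2 + c * t * α₁ * h1 - t ^ 2 * α₁ * α₂ * (a.2.1 - b.2.1) * hc
  · intro t a _
    ring

end ExponentialSums

section Reduction

lemma pow_dvd_pow_succ_self (p n : ℕ) : p ^ n ∣ p ^ (n + 1) := pow_dvd_pow p n.le_succ

/-- Reduction modulo `p ^ n` of residues modulo `p ^ (n + 1)`. -/
noncomputable abbrev reduceHom (p n : ℕ) : ZMod (p ^ (n + 1)) →+* ZMod (p ^ n) :=
  ZMod.castHom (pow_dvd_pow_succ_self p n) (ZMod (p ^ n))

lemma reduceHom_eq_zero_iff {p n : ℕ} (x : ZMod (p ^ (n + 1))) :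
    reduceHom p n x = 0 ↔ ∃ e, x = (p : ZMod (p ^ (n + 1))) ^ n * e := by
  constructor
  · intro h
    obtain ⟨k, rfl⟩ := ZMod.intCast_surjective x
    rw [map_intCast, ZMod.intCast_zmod_eq_zero_iff_dvd] at h
    obtain ⟨e, rfl⟩ := h
    exact ⟨e, by push_cast; rfl⟩
  · rintro ⟨e, rfl⟩
    rw [map_mul, map_pow, map_natCast, ← Nat.cast_pow, ZMod.natCast_self, zero_mul]

end Reduction

section FiniteField

open Finset

variable {F : Type*} [Field F] [Fintype F] [DecidableEq F]

lemma sum_quadraticChar_affine (hF : ringChar F ≠ 2) (a : F) {b : F} (hb : b ≠ 0) :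
    ∑ x : F, quadraticChar F (a + b * x) = 0 := by
  rw [← quadraticChar_sum_zero hF]
  exact ((Equiv.mulLeft₀ b hb).trans (Equiv.addLeft a)).sum_comp fun x => quadraticChar F x

lemma sum_quadraticChar_mul_sq_add (hF : ringChar F ≠ 2) {a b : F} (ha : a ≠ 0) (hb : b ≠ 0) :
    ∑ x : F, quadraticChar F (a * x ^ 2 + b) = -quadraticChar F a := by
  have hcard (y : F) : (#{x : F | x ^ 2 = y} : ℤ) = quadraticChar F y + 1 := by
    rw [← quadraticChar_card_sqrts hF y]
    congr 2
    ext x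
    simp
  have hfiber : ∑ x : F, quadraticChar F (a * x ^ 2 + b) =
      ∑ y : F, (quadraticChar F y + 1) * quadraticChar F (a * y + b) := by
    rw [← Finset.sum_fiberwise (s := univ) (g := fun x : F => x ^ 2)]
    refine Finset.sum_congr rfl fun y _ => ?_
    rw [← hcard y, ← nsmul_eq_mul, ← Finset.sum_const]
    refine Finset.sum_congr rfl fun x hx => ?_
    rw [(Finset.mem_filter.mp hx).2]
  have hinv (y : F) : (quadraticChar F y + 1) * quadraticChar F (a * y + b) =
      quadraticChar F (b + a * y) + (quadraticChar F (a + b * y⁻¹) -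
        if y = 0 then quadraticChar F a else 0) := by
    split_ifs with hy
    · simp [hy]
    · have hy2 : quadraticChar F y * quadraticChar F y = 1 := by
        rw [← sq]; exact quadraticChar_sq_one hy
      have : a * y + b = y * (a + b * y⁻¹) := by field_simp
      rw [add_mul, one_mul, add_comm b, this, map_mul]
      linear_combination quadraticChar F (a + b * y⁻¹) * hy2
  rw [hfiber, Finset.sum_congr rfl fun y _ => hinv y, Finset.sum_add_distrib,
    Finset.sum_sub_distrib, sum_quadraticChar_affine hF b ha,
    show ∑ y : F, quadraticChar F (a + b * y⁻¹) = ∑ y : F, quadraticChar F (a + b * y) from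
      Equiv.sum_comp (Equiv.inv F) (fun y => quadraticChar F (a + b * y)),
    sum_quadraticChar_affine hF a hb]
  simp

/-- The number of zeros with non-zero coordinates of a ternary diagonal form over a finite
field. -/
lemma card_unitZeros_field (hF : ringChar F ≠ 2) {α₁ α₂ α₃ : F} (h1 : α₁ ≠ 0) (h2 : α₂ ≠ 0)
    (h3 : α₃ ≠ 0) :
    (#(unitZeros α₁ α₂ α₃) : ℤ) = (Fintype.card F - (2 + quadraticChar F (-(α₁ * α₂)) +
      quadraticChar F (-(α₁ * α₃)) + quadraticChar F (-(α₂ * α₃)))) * (Fintype.card F - 1) := by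
  have hcard (y : F) : (#{x : F | x ^ 2 = y} : ℤ) = quadraticChar F y + 1 := by
    rw [← quadraticChar_card_sqrts hF y]
    congr 2
    ext x
    simp
  have hcard' (y : F) : (#{x : F | x ≠ 0 ∧ x ^ 2 = y} : ℤ) =
      quadraticChar F y + 1 - if y = 0 then 1 else 0 := by
    split_ifs with hy
    · subst hy
      simp
    · rw [sub_zero, ← hcard y]
      congr 2
      ext x
      simp only [mem_filter, mem_univ, true_and, and_iff_right_iff_imp]
      rintro rfl rfl
      simp at hy
  have hχ {x y z : F} (hz : z ≠ 0) (h : x = y * z ^ 2) :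
      quadraticChar F x = quadraticChar F y := by
    rw [h, map_mul, map_pow, quadraticChar_sq_one hz, mul_one]
  have hscale : #(unitZeros α₁ α₂ α₃) = #(((univ : Finset F).filter (· ≠ 0)) ×ˢ
      univ.filter fun u : F × F =>
        u.1 ≠ 0 ∧ u.2 ≠ 0 ∧ u.2 ^ 2 = -(α₁ * u.1 ^ 2 + α₃) / α₂) := by
    refine Finset.card_nbij' (fun a => (a.2.2, a.1 / a.2.2, a.2.1 / a.2.2))
      (fun b => (b.2.1 * b.1, b.2.2 * b.1, b.1)) ?_ ?_ ?_ ?_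
    · intro a ha
      simp only [mem_coe, mem_unitZeros, isUnit_iff_ne_zero] at ha
      obtain ⟨ha1, ha2, ha3, ha⟩ := ha
      simp only [mem_coe, mem_product, mem_filter, mem_univ, true_and]
      refine ⟨ha3, div_ne_zero ha1 ha3, div_ne_zero ha2 ha3, ?_⟩
      field_simp
      linear_combination ha
    · intro b hb
      simp only [mem_coe, mem_product, mem_filter, mem_univ, true_and] at hb
      obtain ⟨hb0, hb1, hb2, hb⟩ := hb
      simp only [mem_coe, mem_unitZeros, isUnit_iff_ne_zero]
      refine ⟨mul_ne_zero hb1 hb0, mul_ne_zero hb2 hb0, hb0, ?_⟩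
      rw [eq_div_iff h2] at hb
      linear_combination b.1 ^ 2 * hb
    · intro a ha
      simp only [mem_coe, mem_unitZeros, isUnit_iff_ne_zero] at ha
      obtain ⟨ha1, ha2, ha3, ha⟩ := ha
      simp [ha3]
    · intro b hb
      simp only [mem_coe, mem_product, mem_filter, mem_univ, true_and] at hb
      simp [hb.1]
  have hnonzero : (#((univ : Finset F).filter (· ≠ 0)) : ℤ) = Fintype.card F - 1 := by
    rw [Finset.filter_ne', Finset.card_erase_of_mem (mem_univ _), Finset.card_univ,
      Nat.cast_sub Fintype.card_pos, Nat.cast_one]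
  have hconic : (#(univ.filter fun u : F × F =>
        u.1 ≠ 0 ∧ u.2 ≠ 0 ∧ u.2 ^ 2 = -(α₁ * u.1 ^ 2 + α₃) / α₂) : ℤ) =
      ∑ u : F with u ≠ 0, (#{v : F | v ≠ 0 ∧ v ^ 2 = -(α₁ * u ^ 2 + α₃) / α₂} : ℤ) := by
    rw [Finset.card_eq_sum_card_fiberwise (f := Prod.fst) (t := univ.filter (· ≠ 0))
      (fun u hu => by simp at hu ⊢; exact hu.1), Nat.cast_sum]
    refine Finset.sum_congr rfl fun u hu => ?_
    congr 1
    have hu' := (mem_filter.mp hu).2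
    refine Finset.card_nbij' Prod.snd (fun v => (u, v)) ?_ ?_ ?_ ?_
    · rintro ⟨x, v⟩ hx
      simp only [mem_coe, mem_filter, mem_univ, true_and] at hx ⊢
      obtain ⟨hx, rfl⟩ := hx
      exact hx.2
    · intro v hv
      simp only [mem_coe, mem_filter, mem_univ, true_and, and_true] at hv ⊢
      exact ⟨hu', hv⟩
    · rintro ⟨x, v⟩ hx
      simp only [mem_coe, mem_filter, mem_univ, true_and] at hx
      rw [hx.2]
    · intro v _
      rfl
  have hpoints : ∑ u : F with u ≠ 0, (if -(α₁ * u ^ 2 + α₃) / α₂ = 0 then (1 : ℤ) else 0) =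
      quadraticChar F (-(α₁ * α₃)) + 1 := by
    rw [← Finset.sum_filter, Finset.sum_const, nsmul_eq_mul, mul_one, Finset.filter_filter]
    have hne : -α₃ / α₁ ≠ 0 := div_ne_zero (neg_ne_zero.mpr h3) h1
    rw [hχ (x := -(α₁ * α₃)) (y := -α₃ / α₁) h1 (by field_simp)]
    have := hcard' (-α₃ / α₁)
    rw [if_neg hne, sub_zero] at this
    rw [← this]
    congr 2
    ext u
    simp only [mem_filter, mem_univ, true_and, and_congr_right_iff, div_eq_zero_iff, h2, or_false]
    intro _
    rw [eq_div_iff h1]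
    constructor <;> intro h <;> linear_combination -h
  have hchar : ∑ u : F with u ≠ 0, quadraticChar F (-(α₁ * u ^ 2 + α₃) / α₂) =
      -quadraticChar F (-(α₁ * α₂)) - quadraticChar F (-(α₂ * α₃)) := by
    have hterm (u : F) : quadraticChar F (-(α₁ * u ^ 2 + α₃) / α₂) =
        quadraticChar F (-(α₁ * α₂) * u ^ 2 + -(α₂ * α₃)) :=
      (hχ h2 (by field_simp; ring)).symm
    rw [Finset.filter_ne', Finset.sum_erase_eq_sub (mem_univ _),
      Finset.sum_congr rfl fun u _ => hterm u, hterm 0,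
      sum_quadraticChar_mul_sq_add hF (neg_ne_zero.mpr (mul_ne_zero h1 h2))
        (neg_ne_zero.mpr (mul_ne_zero h2 h3))]
    simp
  rw [hscale, Finset.card_product, Nat.cast_mul, hnonzero, hconic,
    Finset.sum_congr rfl fun u _ => hcard' _, Finset.sum_sub_distrib, Finset.sum_add_distrib,
    hpoints, hchar, Finset.sum_const, nsmul_eq_mul, mul_one, hnonzero]
  ring

end FiniteField

section Poisson

lemma SchwartzMap.exists_norm_mul_le (f : 𝓢(ℝ, ℂ)) (k : ℕ) :
    ∃ C : ℝ, 0 < C ∧ ∀ x : ℝ, |x| ^ k * ‖f x‖ ≤ C := by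
  obtain ⟨C, hC, h⟩ := f.decay k 0
  refine ⟨C, hC, fun x => ?_⟩
  simpa using h x

lemma SchwartzMap.summable_norm_int_mul (f : 𝓢(ℝ, ℂ)) {c : ℝ} (hc : c ≠ 0) :
    Summable fun k : ℤ => ‖f (c * k)‖ := by
  obtain ⟨C, -, hC⟩ := f.exists_norm_mul_le 2
  have hsum : Summable fun k : ℤ => C / c ^ 2 * (1 / (k : ℝ) ^ 2) :=
    (Real.summable_one_div_int_pow.mpr one_lt_two).mul_left _
  refine Summable.of_norm_bounded_eventually hsum ?_
  rw [Filter.eventually_cofinite]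
  refine (Set.finite_singleton (0 : ℤ)).subset fun k hk => ?_
  by_contra hk0
  have hk' : (k : ℝ) ≠ 0 := by exact_mod_cast hk0
  refine hk ?_
  rw [norm_norm, div_mul_div_comm, mul_one, ← mul_pow, le_div_iff₀ (by positivity), mul_comm]
  simpa only [sq_abs] using hC (c * k)

lemma SchwartzMap.fourier_comp_mul (f : 𝓢(ℝ, ℂ)) {c : ℝ} (hc : 0 < c) (ξ : ℝ) :
    𝓕 (fun y => f (c * y)) ξ = (c⁻¹ : ℝ) * 𝓕 f (c⁻¹ * ξ) := by
  rw [SchwartzMap.fourier_coe, Real.fourier_real_eq_integral_exp_smul,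
    Real.fourier_real_eq_integral_exp_smul]
  have := Measure.integral_comp_mul_left
    (fun v : ℝ => Complex.exp (↑(-2 * Real.pi * v * (c⁻¹ * ξ)) * Complex.I) • f v) c
  rw [abs_of_pos (inv_pos.mpr hc), Complex.real_smul] at this
  rw [← this]
  congr 1
  funext y
  rw [show -2 * Real.pi * (c * y) * (c⁻¹ * ξ) = -2 * Real.pi * y * ξ by field_simp]

/-- Poisson summation for a dilated Schwartz function over a residue class modulo `q`. -/
lemma SchwartzMap.tsum_residue_eq (f : 𝓢(ℝ, ℂ)) {q : ℕ} [NeZero q] {N : ℝ} (hN : 0 < N)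
    (a : ZMod q) :
    ∑' x : ℤ, (if (x : ZMod q) = a then f (x / N) else 0) =
      (N / q : ℝ) * ∑' k : ℤ, 𝓕 f (N / q * k) * ZMod.stdAddChar ((k : ZMod q) * a) := by
  have hq : (0 : ℝ) < q := by exact_mod_cast Nat.pos_of_neZero q
  have hqN : 0 < q / N := div_pos hq hN
  have hval : ((a.val : ℤ) : ZMod q) = a := by simp
  let g : 𝓢(ℝ, ℂ) := SchwartzMap.compCLMOfContinuousLinearEquiv ℂ
    (ContinuousLinearEquiv.smulLeft (Units.mk0 (q / N) hqN.ne')) f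
  have hg (y : ℝ) : g y = f (q / N * y) := rfl
  have hinj : Function.Injective fun k : ℤ => (a.val : ℤ) + q * k := by
    intro k l h
    simpa [NeZero.ne q] using h
  have hsupp : Function.support (fun x : ℤ => if (x : ZMod q) = a then f (x / N) else 0) ⊆
      Set.range fun k : ℤ => (a.val : ℤ) + q * k := by
    intro x hx
    have hxa : (x : ZMod q) = a := by
      by_contra h
      simp [h] at hx
    rw [← hval, ZMod.intCast_eq_intCast_iff_dvd_sub] at hxa
    obtain ⟨k, hk⟩ := hxa
    exact ⟨-k, by dsimp only; linear_combination hk⟩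
  rw [← hinj.tsum_eq hsupp]
  have hpoisson := g.tsum_eq_tsum_fourier (a.val / q)
  have hleft (k : ℤ) : (if (((a.val : ℤ) + q * k : ℤ) : ZMod q) = a then
      f (((a.val : ℤ) + q * k : ℤ) / N) else 0) = g (a.val / q + k) := by
    rw [if_pos (by simp), hg]
    congr 1
    push_cast
    field_simp
  have hright (k : ℤ) : 𝓕 g k * fourier k ((a.val / q : ℝ) : UnitAddCircle) =
      (N / q : ℝ) * (𝓕 f (N / q * k) * ZMod.stdAddChar ((k : ZMod q) * a)) := by
    have hchar : ZMod.stdAddChar ((k : ZMod q) * a) =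
        fourier k ((a.val / q : ℝ) : UnitAddCircle) := by
      rw [← hval, ← Int.cast_mul, ZMod.stdAddChar_coe, fourier_coe_apply, hval]
      congr 1
      push_cast
      ring
    rw [hchar, SchwartzMap.fourier_coe, show (g : ℝ → ℂ) = fun y => f (q / N * y) from rfl,
      f.fourier_comp_mul hqN, inv_div, mul_assoc]
  simp_rw [hleft, hpoisson, hright]
  exact tsum_mul_left

end Poisson

section TripleSums

lemma summable_norm_mul_three {u v w : ℤ → ℂ} (hu : Summable fun k => ‖u k‖)
    (hv : Summable fun k => ‖v k‖) (hw : Summable fun k => ‖w k‖) :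
    Summable fun m : ℤ × ℤ × ℤ => ‖u m.1 * v m.2.1 * w m.2.2‖ := by
  simpa only [mul_assoc] using hu.mul_norm (hv.mul_norm hw)

lemma tsum_mul_three {u v w : ℤ → ℂ} (hu : Summable fun k => ‖u k‖)
    (hv : Summable fun k => ‖v k‖) (hw : Summable fun k => ‖w k‖) :
    ∑' m : ℤ × ℤ × ℤ, u m.1 * v m.2.1 * w m.2.2 = (∑' k, u k) * (∑' k, v k) * ∑' k, w k := by
  rw [mul_assoc, tsum_mul_tsum_of_summable_norm hv hw,
    tsum_mul_tsum_of_summable_norm hu (hv.mul_norm hw)]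
  simp only [mul_assoc]

lemma tsum_sum_mul_three {ι : Type*} (Z : Finset ι) {u v w : ι → ℤ → ℂ}
    (hu : ∀ a, Summable fun k => ‖u a k‖) (hv : ∀ a, Summable fun k => ‖v a k‖)
    (hw : ∀ a, Summable fun k => ‖w a k‖) :
    ∑' m : ℤ × ℤ × ℤ, ∑ a ∈ Z, u a m.1 * v a m.2.1 * w a m.2.2 =
      ∑ a ∈ Z, (∑' k, u a k) * (∑' k, v a k) * ∑' k, w a k := by
  rw [Summable.tsum_finsetSum fun a _ => (summable_norm_mul_three (hu a) (hv a) (hw a)).of_norm]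
  exact Finset.sum_congr rfl fun a _ => tsum_mul_three (hu a) (hv a) (hw a)

end TripleSums

section PrimePower

variable {p : ℕ} [hp : Fact p.Prime]

lemma ZMod.isUnit_iff_castHom_ne_zero {n : ℕ} (hn : n ≠ 0) (x : ZMod (p ^ n)) :
    IsUnit x ↔ ZMod.castHom (dvd_pow_self p hn) (ZMod p) x ≠ 0 := by
  obtain ⟨k, rfl⟩ := ZMod.natCast_zmod_surjective x
  rw [ZMod.isUnit_natCast_iff_not_dvd_pow hp.out (Nat.pos_of_ne_zero hn), map_natCast, Ne,
    ZMod.natCast_eq_zero_iff]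

lemma ZMod.isUnit_intCast_pow_iff {n : ℕ} (hn : n ≠ 0) (k : ℤ) :
    IsUnit (k : ZMod (p ^ n)) ↔ ¬ (p : ℤ) ∣ k := by
  rw [ZMod.isUnit_iff_castHom_ne_zero hn, map_intCast, Ne, ZMod.intCast_zmod_eq_zero_iff_dvd]

/-- Square roots of units modulo an odd prime power are unique up to sign. -/
lemma ZMod.eq_or_eq_neg_of_sq_eq_sq {n : ℕ} (hp2 : 2 < p) {x y : ZMod (p ^ n)}
    (hx : IsUnit x) (h : x ^ 2 = y ^ 2) : x = y ∨ x = -y := by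
  rcases eq_or_ne n 0 with rfl | hn
  · have : Subsingleton (ZMod (p ^ 0)) := by rw [pow_zero]; infer_instance
    exact Or.inl (Subsingleton.elim _ _)
  have h0 : (x - y) * (x + y) = 0 := by linear_combination h
  have htwo : (2 : ZMod p) ≠ 0 := by
    have := (ZMod.natCast_eq_zero_iff 2 p).not.mpr (Nat.not_dvd_of_pos_of_lt two_pos hp2)
    exact_mod_cast this
  by_cases hu : IsUnit (x + y)
  · left
    have := hu.mul_left_eq_zero.mp h0
    exact sub_eq_zero.mp this
  · right
    have hv : IsUnit (x - y) := by
      rw [ZMod.isUnit_iff_castHom_ne_zero hn] at hx hu ⊢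
      intro hv
      rw [not_not, map_add] at hu
      rw [map_sub] at hv
      have : (2 : ZMod p) * ZMod.castHom (dvd_pow_self p hn) (ZMod p) x = 0 := by
        linear_combination hu + hv
      exact (mul_ne_zero htwo hx) this
    have := hv.mul_right_eq_zero.mp h0
    exact eq_neg_of_add_eq_zero_left this

/-- The exponential sum over the unit zeros modulo `p ^ n` at the frequency `m`. -/
noncomputable def unitZeroSum (p n : ℕ) [Fact p.Prime] (α₁ α₂ α₃ : ℤ) (m : ℤ × ℤ × ℤ) : ℂ :=
  ∑ a ∈ unitZeros (α₁ : ZMod (p ^ n)) α₂ α₃,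
    ZMod.stdAddChar (N := p ^ n) (m.1 * a.1 + m.2.1 * a.2.1 + m.2.2 * a.2.2)

/-- The form dual to `α₁x₁² + α₂x₂² + α₃x₃²`. -/
def dualForm (α₁ α₂ α₃ : ℤ) (m : ℤ × ℤ × ℤ) : ℤ :=
  α₂ * α₃ * m.1 ^ 2 + α₁ * α₃ * m.2.1 ^ 2 + α₁ * α₂ * m.2.2 ^ 2

lemma ZMod.pow_mul_intCast_eq_zero_iff {n i h : ℕ} (hn : n = i + h) (k : ℤ) :
    (p : ZMod (p ^ n)) ^ i * (k : ZMod (p ^ n)) = 0 ↔ (p : ℤ) ^ h ∣ k := by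
  have hp0 : (p : ℤ) ^ i ≠ 0 := pow_ne_zero _ (by exact_mod_cast hp.out.ne_zero)
  have : (p : ZMod (p ^ n)) ^ i * (k : ZMod (p ^ n)) = (((p : ℤ) ^ i * k : ℤ) : ZMod (p ^ n)) := by
    push_cast; rfl
  rw [this, ZMod.intCast_zmod_eq_zero_iff_dvd, Nat.cast_pow, hn, pow_add,
    mul_dvd_mul_iff_left hp0]

lemma ZMod.card_pow_mul_eq_zero {n i : ℕ} (hi : i ≤ n) :
    Finset.card {x : ZMod (p ^ n) | (p : ZMod (p ^ n)) ^ i * x = 0} ≤ p ^ i := by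
  have hpos : 0 < p ^ i := pow_pos hp.out.pos _
  have hsub : ({x : ZMod (p ^ n) | (p : ZMod (p ^ n)) ^ i * x = 0} : Finset _) ⊆
      (Finset.range (p ^ i)).image fun t : ℕ => ((p ^ (n - i) * t : ℕ) : ZMod (p ^ n)) := by
    intro x hx
    simp only [Finset.mem_filter, Finset.mem_univ, true_and] at hx
    have hx' : (p : ZMod (p ^ n)) ^ i * ((x.val : ℤ) : ZMod (p ^ n)) = 0 := by
      simpa using hx
    rw [ZMod.pow_mul_intCast_eq_zero_iff (h := n - i) (by omega)] at hx'
    obtain ⟨t, ht⟩ : p ^ (n - i) ∣ x.val := by exact_mod_cast hx'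
    refine Finset.mem_image.mpr ⟨t, Finset.mem_range.mpr ?_, ?_⟩
    · have hlt := ZMod.val_lt x
      rw [ht] at hlt
      have : p ^ n = p ^ (n - i) * p ^ i := by rw [← pow_add]; congr 1; omega
      rw [this] at hlt
      exact Nat.lt_of_mul_lt_mul_left hlt
    · rw [← ht, ZMod.natCast_zmod_val]
  exact (Finset.card_le_card hsub).trans (Finset.card_image_le.trans (by simp))

/-- A frequency normal to the cone at a zero `b`, to the precision of the localization of the
exponential sum, is a zero of the dual form. -/
lemma dvd_dualForm_of_normal {α₁ α₂ α₃ b₁ b₂ b₃ : ℤ} {m : ℤ × ℤ × ℤ} {n h : ℕ} (hn : n ≤ 2 * h + 1)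
    (hα₁ : ¬ (p : ℤ) ∣ α₁) (hb₁ : ¬ (p : ℤ) ∣ b₁)
    (hb : (p : ℤ) ^ n ∣ α₁ * b₁ ^ 2 + α₂ * b₂ ^ 2 + α₃ * b₃ ^ 2)
    (h₁₂ : (p : ℤ) ^ h ∣ m.1 * (α₂ * b₂) - m.2.1 * (α₁ * b₁))
    (h₁₃ : (p : ℤ) ^ h ∣ m.1 * (α₃ * b₃) - m.2.2 * (α₁ * b₁))
    (hm : (p : ℤ) ^ (n - 1) ∣ m.1 * b₁ + m.2.1 * b₂ + m.2.2 * b₃) :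
    (p : ℤ) ^ (n - 1) ∣ dualForm α₁ α₂ α₃ m := by
  have hpZ : Prime (p : ℤ) := Nat.prime_iff_prime_int.mp hp.out
  have hcop : IsCoprime ((p : ℤ) ^ (n - 1)) (α₁ * b₁ ^ 2) := by
    refine IsCoprime.pow_left ((Prime.coprime_iff_not_dvd hpZ).mpr fun hdvd => ?_)
    rcases hpZ.dvd_or_dvd hdvd with h | h
    · exact hα₁ h
    · exact hb₁ (hpZ.dvd_of_dvd_pow h)
  refine hcop.dvd_of_dvd_mul_left ?_
  have hb' := (pow_dvd_pow (p : ℤ) (Nat.sub_le n 1)).trans hb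
  have hsq : (p : ℤ) ^ (n - 1) ∣ (p : ℤ) ^ (2 * h) := pow_dvd_pow _ (by omega)
  obtain ⟨u, hu⟩ := h₁₂
  obtain ⟨v, hv⟩ := h₁₃
  have key : α₁ * b₁ ^ 2 * dualForm α₁ α₂ α₃ m =
      (-(α₂ * α₃ * m.1 ^ 2)) * (α₁ * b₁ ^ 2 + α₂ * b₂ ^ 2 + α₃ * b₃ ^ 2)
      + (2 * m.1 * α₂ * α₃ * α₁ * b₁) * (m.1 * b₁ + m.2.1 * b₂ + m.2.2 * b₃)
      + (α₃ * u ^ 2 + α₂ * v ^ 2) * (p : ℤ) ^ (2 * h) := by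
    have hu2 : (m.1 * (α₂ * b₂) - m.2.1 * (α₁ * b₁)) ^ 2 = u ^ 2 * (p : ℤ) ^ (2 * h) := by
      rw [hu]; ring
    have hv2 : (m.1 * (α₃ * b₃) - m.2.2 * (α₁ * b₁)) ^ 2 = v ^ 2 * (p : ℤ) ^ (2 * h) := by
      rw [hv]; ring
    rw [dualForm]
    linear_combination α₃ * hu2 + α₂ * hv2
  rw [key]
  exact dvd_add (dvd_add (hb'.mul_left _) (hm.mul_left _)) (hsq.mul_left _)

/-- At a frequency not divisible by `p`, the exponential sum vanishes unless all coordinates are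
prime to `p` and the dual form is divisible by `p ^ (n - 1)`; it exhibits square-root
cancellation. -/
lemma unitZeroSum_ne_zero {n : ℕ} (hn : 2 ≤ n) (hp2 : 2 < p) {α₁ α₂ α₃ : ℤ}
    (h1 : ¬ (p : ℤ) ∣ α₁) (h2 : ¬ (p : ℤ) ∣ α₂) (h3 : ¬ (p : ℤ) ∣ α₃) {m : ℤ × ℤ × ℤ}
    (hm : ¬ ((p : ℤ) ∣ m.1 ∧ (p : ℤ) ∣ m.2.1 ∧ (p : ℤ) ∣ m.2.2))
    (hsum : unitZeroSum p n α₁ α₂ α₃ m ≠ 0) :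
    (¬ (p : ℤ) ∣ m.1 ∧ ¬ (p : ℤ) ∣ m.2.1 ∧ ¬ (p : ℤ) ∣ m.2.2) ∧
      (p : ℤ) ^ (n - 1) ∣ dualForm α₁ α₂ α₃ m ∧
      ‖unitZeroSum p n α₁ α₂ α₃ m‖ ≤ 2 * (p : ℝ) ^ (2 * n - n / 2) := by
  have hn0 : n ≠ 0 := by omega
  have hpZ : Prime (p : ℤ) := Nat.prime_iff_prime_int.mp hp.out
  have hpn : (p : ZMod (p ^ n)) ^ n = 0 := by
    rw [← Nat.cast_pow]; exact ZMod.natCast_self _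
  set i := n - n / 2 with hi
  have hc : (p : ZMod (p ^ n)) ^ i * (p : ZMod (p ^ n)) ^ i = 0 := by
    rw [← pow_add]; exact pow_eq_zero_of_le (by omega) hpn
  set S := (unitZeros (α₁ : ZMod (p ^ n)) α₂ α₃).filter fun a =>
    (p : ZMod (p ^ n)) ^ i * (m.1 * (α₂ * a.2.1) - m.2.1 * (α₁ * a.1)) = 0 ∧
    (p : ZMod (p ^ n)) ^ i * (m.1 * (α₃ * a.2.2) - m.2.2 * (α₁ * a.1)) = 0 ∧
    (p : ZMod (p ^ n)) * (m.1 * a.1 + m.2.1 * a.2.1 + m.2.2 * a.2.2) = 0 with hS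
  have hloc : unitZeroSum p n α₁ α₂ α₃ m = ∑ a ∈ S,
      ZMod.stdAddChar (N := p ^ n) (m.1 * a.1 + m.2.1 * a.2.1 + m.2.2 * a.2.2) :=
    sum_unitZeros_eq_sum_filter (ZMod.isPrimitive_stdAddChar _) _ _ _ _ _ _ hc ⟨n, hpn⟩
  obtain ⟨a, ha⟩ : S.Nonempty := by
    by_contra hempty
    rw [Finset.not_nonempty_iff_eq_empty] at hempty
    exact hsum (by rw [hloc, hempty, Finset.sum_empty])
  have hu {k : ℤ} (hk : ¬ (p : ℤ) ∣ k) : IsUnit (k : ZMod (p ^ n)) :=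
    (ZMod.isUnit_intCast_pow_iff hn0 k).mpr hk
  have hunits : (¬ (p : ℤ) ∣ m.1 ∧ ¬ (p : ℤ) ∣ m.2.1 ∧ ¬ (p : ℤ) ∣ m.2.2) ∧
      (p : ℤ) ^ (n - 1) ∣ dualForm α₁ α₂ α₃ m := by
    obtain ⟨a₁, a₂, a₃⟩ := a
    obtain ⟨b₁, rfl⟩ := ZMod.intCast_surjective a₁
    obtain ⟨b₂, rfl⟩ := ZMod.intCast_surjective a₂
    obtain ⟨b₃, rfl⟩ := ZMod.intCast_surjective a₃
    simp only [hS, Finset.mem_filter, mem_unitZeros, ZMod.isUnit_intCast_pow_iff hn0] at ha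
    obtain ⟨⟨hb1, hb2, hb3, hb⟩, h12, h13, h0⟩ := ha
    have hb' : (p : ℤ) ^ n ∣ α₁ * b₁ ^ 2 + α₂ * b₂ ^ 2 + α₃ * b₃ ^ 2 := by
      have := (ZMod.intCast_zmod_eq_zero_iff_dvd (α₁ * b₁ ^ 2 + α₂ * b₂ ^ 2 + α₃ * b₃ ^ 2)
        (p ^ n)).mp (by push_cast; exact hb)
      exact_mod_cast this
    have h12' : (p : ℤ) ^ (n / 2) ∣ m.1 * (α₂ * b₂) - m.2.1 * (α₁ * b₁) :=
      (ZMod.pow_mul_intCast_eq_zero_iff (n := n) (i := i) (h := n / 2) (by omega) _).mp (by push_cast; exact h12)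
    have h13' : (p : ℤ) ^ (n / 2) ∣ m.1 * (α₃ * b₃) - m.2.2 * (α₁ * b₁) :=
      (ZMod.pow_mul_intCast_eq_zero_iff (n := n) (i := i) (h := n / 2) (by omega) _).mp (by push_cast; exact h13)
    have h0' : (p : ℤ) ^ (n - 1) ∣ m.1 * b₁ + m.2.1 * b₂ + m.2.2 * b₃ :=
      (ZMod.pow_mul_intCast_eq_zero_iff (n := n) (i := 1) (h := n - 1) (by omega) _).mp
        (by push_cast; rw [pow_one]; exact h0)
    refine ⟨?_, dvd_dualForm_of_normal (by omega) h1 hb1 hb' h12' h13' h0'⟩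
    have hp12 := (dvd_pow_self (p : ℤ) (show n / 2 ≠ 0 by omega)).trans h12'
    have hp13 := (dvd_pow_self (p : ℤ) (show n / 2 ≠ 0 by omega)).trans h13'
    have hm1 : ¬ (p : ℤ) ∣ m.1 := by
      intro hdvd
      have h21 := (dvd_sub_right (hdvd.mul_right (α₂ * b₂))).mp hp12
      have h31 := (dvd_sub_right (hdvd.mul_right (α₃ * b₃))).mp hp13
      simp only [hpZ.dvd_mul, h1, hb1, or_false] at h21 h31
      exact hm ⟨hdvd, h21, h31⟩
    refine ⟨hm1, fun hdvd => ?_, fun hdvd => ?_⟩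
    · have := (dvd_sub_left (hdvd.mul_right (α₁ * b₁))).mp hp12
      simp only [hpZ.dvd_mul, h2, hb2, hm1, or_false] at this
    · have := (dvd_sub_left (hdvd.mul_right (α₁ * b₁))).mp hp13
      simp only [hpZ.dvd_mul, h3, hb3, hm1, or_false] at this
  refine ⟨hunits.1, hunits.2, ?_⟩
  have hcard : S.card ≤ 2 * (p ^ n * p ^ i) := by
    refine (Finset.card_le_mul_card_image_of_maps_to
      (f := fun a => (a.1, (m.1 : ZMod (p ^ n)) * (α₂ * a.2.1) - m.2.1 * (α₁ * a.1)))
      (t := Finset.univ ×ˢ Finset.univ.filter fun x => (p : ZMod (p ^ n)) ^ i * x = 0) ?_ 2 ?_).trans ?_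
    · intro a ha
      simp only [Finset.mem_product, Finset.mem_univ, Finset.mem_filter, true_and]
      exact (Finset.mem_filter.mp ha).2.1
    · intro x _
      rcases Finset.eq_empty_or_nonempty
        {a ∈ S | (a.1, (m.1 : ZMod (p ^ n)) * (α₂ * a.2.1) - m.2.1 * (α₁ * a.1)) = x} with h | h
      · rw [h]; simp
      · obtain ⟨b, hb⟩ := h
        refine (Finset.card_le_card (t := {b, (b.1, b.2.1, -b.2.2)}) ?_).trans Finset.card_le_two
        intro a ha
        simp only [Finset.mem_filter] at ha hb
        have hab := ha.2.trans hb.2.symm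
        simp only [Prod.mk.injEq] at hab
        obtain ⟨e1, e2⟩ := hab
        have e2' : a.2.1 = b.2.1 := by
          rw [e1] at e2
          exact (hu h2).mul_left_cancel ((hu hunits.1.1).mul_left_cancel (sub_left_inj.mp e2))
        have ha' := mem_unitZeros.mp (Finset.mem_filter.mp ha.1).1
        have hb' := mem_unitZeros.mp (Finset.mem_filter.mp hb.1).1
        have hsq : a.2.2 ^ 2 = b.2.2 ^ 2 := by
          refine (hu h3).mul_left_cancel ?_
          have q1 := ha'.2.2.2
          rw [e1, e2'] at q1
          linear_combination q1 - hb'.2.2.2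
        simp only [Finset.mem_insert, Finset.mem_singleton]
        rcases ZMod.eq_or_eq_neg_of_sq_eq_sq hp2 ha'.2.2.1 hsq with e3 | e3
        · exact Or.inl (Prod.ext e1 (Prod.ext e2' e3))
        · exact Or.inr (Prod.ext e1 (Prod.ext e2' e3))
    · rw [Finset.card_product, Finset.card_univ, ZMod.card]
      gcongr
      exact ZMod.card_pow_mul_eq_zero (by omega)
  rw [hloc]
  refine (norm_sum_le _ _).trans ?_
  simp only [AddChar.norm_apply, Finset.sum_const, nsmul_eq_mul, mul_one]
  refine (Nat.cast_le.mpr hcard).trans (le_of_eq ?_)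
  rw [← pow_add, show n + i = 2 * n - n / 2 by omega]
  push_cast
  rfl

section Lifting

variable {n : ℕ}

lemma isUnit_reduceHom_iff (hn : n ≠ 0) (x : ZMod (p ^ (n + 1))) :
    IsUnit (reduceHom p n x) ↔ IsUnit x := by
  obtain ⟨k, rfl⟩ := ZMod.intCast_surjective x
  rw [map_intCast, ZMod.isUnit_intCast_pow_iff hn, ZMod.isUnit_intCast_pow_iff n.succ_ne_zero]

lemma card_reduceHom_fiber (y : ZMod (p ^ n)) :
    Finset.card {x : ZMod (p ^ (n + 1)) | reduceHom p n x = y} = p := by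
  have hsurj : Function.Surjective (reduceHom p n) := ZMod.castHom_surjective _
  have hconst (z : ZMod (p ^ n)) : Finset.card {x : ZMod (p ^ (n + 1)) | reduceHom p n x = z} =
      Finset.card {x : ZMod (p ^ (n + 1)) | reduceHom p n x = y} :=
    AddMonoidHom.card_fiber_eq_of_mem_range (reduceHom p n) (hsurj z) (hsurj y)
  have htotal := Finset.card_eq_sum_card_fiberwise (f := reduceHom p n)
    (s := Finset.univ) (t := Finset.univ) (fun _ _ => by simp)
  simp only [hconst, Finset.sum_const, Finset.card_univ, ZMod.card, smul_eq_mul] at htotal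
  exact (Nat.eq_of_mul_eq_mul_left (pow_pos hp.out.pos n)
    ((pow_succ p n).symm.trans htotal)).symm

/-- Hensel lifting of square roots of units by one power of `p`. -/
lemma existsUnique_sq_lift (hn : n ≠ 0) (hp2 : 2 < p) {α c b : ZMod (p ^ (n + 1))} (hα : IsUnit α)
    (hb : IsUnit b) (hc : reduceHom p n (α * b ^ 2) = reduceHom p n c) :
    ∃! x, reduceHom p n x = reduceHom p n b ∧ α * x ^ 2 = c := by
  have htwo : IsUnit (2 : ZMod (p ^ (n + 1))) := by
    have := (ZMod.isUnit_intCast_pow_iff (p := p) n.succ_ne_zero 2).mpr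
      (by exact_mod_cast Nat.not_dvd_of_pos_of_lt two_pos hp2)
    exact_mod_cast this
  have hnil : (p : ZMod (p ^ (n + 1))) ^ (n + 1) = 0 := by
    rw [← Nat.cast_pow]; exact ZMod.natCast_self _
  have hsq : (p : ZMod (p ^ (n + 1))) ^ n * (p : ZMod (p ^ (n + 1))) ^ n = 0 := by
    rw [← pow_add]; exact pow_eq_zero_of_le (by omega) hnil
  obtain ⟨e, he⟩ := (reduceHom_eq_zero_iff (α * b ^ 2 - c)).mp (by rw [map_sub, hc, sub_self])
  obtain ⟨w, hw⟩ := ((htwo.mul hα).mul hb).exists_right_inv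
  refine ⟨b - p ^ n * (e * w), ⟨?_, ?_⟩, ?_⟩
  · rw [map_sub, (reduceHom_eq_zero_iff _).mpr ⟨_, rfl⟩, sub_zero]
  · linear_combination he - (p : ZMod (p ^ (n + 1))) ^ n * e * hw + α * (e * w) ^ 2 * hsq
  · rintro x ⟨hx, hxc⟩
    set y := b - (p : ZMod (p ^ (n + 1))) ^ n * (e * w) with hy
    have hyc : α * y ^ 2 = c := by
      rw [hy]
      linear_combination he - (p : ZMod (p ^ (n + 1))) ^ n * e * hw + α * (e * w) ^ 2 * hsq
    have hyb : reduceHom p n y = reduceHom p n b := by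
      rw [hy, map_sub, (reduceHom_eq_zero_iff _).mpr ⟨_, rfl⟩, sub_zero]
    have hsum : IsUnit (x + y) := by
      rw [← isUnit_reduceHom_iff hn, map_add, hx, hyb, ← two_mul, ← map_ofNat (reduceHom p n) 2,
        ← map_mul, isUnit_reduceHom_iff hn]
      exact htwo.mul hb
    have hprod : (x - y) * (x + y) = 0 := by
      refine hα.mul_left_cancel ?_
      linear_combination hxc - hyc
    exact sub_eq_zero.mp (hsum.mul_left_eq_zero.mp hprod)

/-- Every unit zero modulo `p ^ n` has exactly `p²` lifts to a unit zero modulo `p ^ (n + 1)`. -/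
lemma card_unitZeros_fiber (hn : n ≠ 0) (hp2 : 2 < p) {α₁ α₂ α₃ : ℤ} (h1 : ¬ (p : ℤ) ∣ α₁)
    {a : ZMod (p ^ n) × ZMod (p ^ n) × ZMod (p ^ n)}
    (ha : a ∈ unitZeros (α₁ : ZMod (p ^ n)) α₂ α₃) :
    Finset.card {b ∈ unitZeros (α₁ : ZMod (p ^ (n + 1))) α₂ α₃ |
      (reduceHom p n b.1, reduceHom p n b.2.1, reduceHom p n b.2.2) = a} = p ^ 2 := by
  obtain ⟨ha1, ha2, ha3, ha⟩ := mem_unitZeros.mp ha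
  have hα : IsUnit (α₁ : ZMod (p ^ (n + 1))) :=
    (ZMod.isUnit_intCast_pow_iff n.succ_ne_zero _).mpr h1
  obtain ⟨b₀, hb₀⟩ := ZMod.castHom_surjective (pow_dvd_pow_succ_self p n) a.1
  have hb₀u : IsUnit b₀ := by rwa [← isUnit_reduceHom_iff hn, reduceHom, hb₀]
  have hprod : Finset.card ((Finset.univ.filter fun x => reduceHom p n x = a.2.1) ×ˢ
      Finset.univ.filter fun x => reduceHom p n x = a.2.2) = p ^ 2 := by
    rw [Finset.card_product, card_reduceHom_fiber, card_reduceHom_fiber, sq]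
  have hlift {x y : ZMod (p ^ (n + 1))} (hx : reduceHom p n x = a.2.1)
      (hy : reduceHom p n y = a.2.2) :
      ∃! z, reduceHom p n z = reduceHom p n b₀ ∧ α₁ * z ^ 2 = -(α₂ * x ^ 2 + α₃ * y ^ 2) := by
    refine existsUnique_sq_lift hn hp2 hα hb₀u ?_
    simp only [map_mul, map_pow, map_neg, map_add, map_intCast, hx, hy]
    rw [reduceHom, hb₀]
    linear_combination ha
  refine (Finset.card_nbij (fun b => b.2) ?_ ?_ ?_).trans hprod
  · intro b hb
    simp only [Finset.mem_coe, Finset.mem_filter, Finset.mem_product, Finset.mem_univ,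
      true_and] at hb ⊢
    rw [← hb.2]
    exact ⟨rfl, rfl⟩
  · intro b hb b' hb' hbb
    simp only [Finset.coe_filter, Set.mem_ofPred_eq, mem_unitZeros] at hb hb'
    have e := hb.2
    have e' := hb'.2
    rw [← e'] at e
    refine Prod.ext ?_ hbb
    have hx : reduceHom p n b'.2.1 = a.2.1 := by rw [← hb'.2]
    have hy : reduceHom p n b'.2.2 = a.2.2 := by rw [← hb'.2]
    refine (hlift hx hy).unique ⟨?_, ?_⟩ ⟨?_, ?_⟩
    · rw [reduceHom, hb₀, ← hb.2]
    · have := hb.1.2.2.2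
      simp only at hbb
      rw [hbb] at this
      linear_combination this
    · rw [reduceHom, hb₀, ← hb'.2]
    · linear_combination hb'.1.2.2.2
  · rintro ⟨x, y⟩ hxy
    simp only [Finset.coe_product, Finset.coe_filter, Finset.mem_univ, true_and, Set.mem_prod,
      Set.mem_ofPred_eq] at hxy
    obtain ⟨hx, hy⟩ := hxy
    obtain ⟨z, ⟨hz, hzc⟩, -⟩ := hlift hx hy
    rw [reduceHom, hb₀] at hz
    refine ⟨(z, x, y), ?_, rfl⟩
    simp only [Finset.coe_filter, Set.mem_ofPred_eq, mem_unitZeros]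
    refine ⟨⟨?_, ?_, ?_, ?_⟩, Prod.ext hz (Prod.ext hx hy)⟩
    · rw [← isUnit_reduceHom_iff hn]; exact hz ▸ ha1
    · rw [← isUnit_reduceHom_iff hn]; exact hx ▸ ha2
    · rw [← isUnit_reduceHom_iff hn]; exact hy ▸ ha3
    · linear_combination hzc

lemma stdAddChar_prime_mul (x : ZMod (p ^ (n + 1))) :
    ZMod.stdAddChar (N := p ^ (n + 1)) (p * x) = ZMod.stdAddChar (reduceHom p n x) := by
  obtain ⟨k, rfl⟩ := ZMod.intCast_surjective x
  have : (p : ZMod (p ^ (n + 1))) * (k : ZMod (p ^ (n + 1))) = ((p * k : ℤ) : ZMod _) := by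
    push_cast; rfl
  rw [this, map_intCast (reduceHom p n), ZMod.stdAddChar_coe, ZMod.stdAddChar_coe]
  have hp0 : (p : ℂ) ≠ 0 := Nat.cast_ne_zero.mpr hp.out.ne_zero
  congr 1
  push_cast
  field_simp
  ring

lemma unitZeroSum_succ_prime_smul (hn : n ≠ 0) (hp2 : 2 < p) {α₁ α₂ α₃ : ℤ}
    (h1 : ¬ (p : ℤ) ∣ α₁) (m : ℤ × ℤ × ℤ) :
    unitZeroSum p (n + 1) α₁ α₂ α₃ ((p : ℤ) • m) = p ^ 2 * unitZeroSum p n α₁ α₂ α₃ m := by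
  have hmaps : ∀ b ∈ unitZeros (α₁ : ZMod (p ^ (n + 1))) α₂ α₃,
      (reduceHom p n b.1, reduceHom p n b.2.1, reduceHom p n b.2.2) ∈
        unitZeros (α₁ : ZMod (p ^ n)) α₂ α₃ := by
    intro b hb
    simp only [mem_unitZeros, isUnit_reduceHom_iff hn] at hb ⊢
    refine ⟨hb.1, hb.2.1, hb.2.2.1, ?_⟩
    simpa only [map_add, map_mul, map_pow, map_intCast, map_zero] using
      congrArg (reduceHom p n) hb.2.2.2
  rw [unitZeroSum, ← Finset.sum_fiberwise_of_maps_to hmaps, unitZeroSum, Finset.mul_sum]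
  refine Finset.sum_congr rfl fun a ha => ?_
  rw [Finset.sum_congr rfl (g := fun _ => ZMod.stdAddChar (N := p ^ n)
    (m.1 * a.1 + m.2.1 * a.2.1 + m.2.2 * a.2.2)), Finset.sum_const,
    card_unitZeros_fiber hn hp2 h1 ha, nsmul_eq_mul, Nat.cast_pow]
  intro b hb
  obtain rfl := (Finset.mem_filter.mp hb).2
  have : ((((p : ℤ) • m).1 : ℤ) : ZMod (p ^ (n + 1))) * b.1 + (((p : ℤ) • m).2.1 : ℤ) * b.2.1
      + (((p : ℤ) • m).2.2 : ℤ) * b.2.2 = p * (m.1 * b.1 + m.2.1 * b.2.1 + m.2.2 * b.2.2) := by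
    simp only [Prod.smul_fst, Prod.smul_snd, smul_eq_mul]
    push_cast
    ring
  rw [this, stdAddChar_prime_mul]
  simp only [map_add, map_mul, map_intCast]

lemma unitZeroSum_add_prime_pow_smul (hn : n ≠ 0) (hp2 : 2 < p) {α₁ α₂ α₃ : ℤ}
    (h1 : ¬ (p : ℤ) ∣ α₁) (m : ℤ × ℤ × ℤ) (k : ℕ) :
    unitZeroSum p (n + k) α₁ α₂ α₃ ((p : ℤ) ^ k • m) =
      p ^ (2 * k) * unitZeroSum p n α₁ α₂ α₃ m := by
  induction k with
  | zero => simp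
  | succ k ih =>
    rw [pow_succ', mul_smul, ← add_assoc, unitZeroSum_succ_prime_smul (by omega) hp2 h1, ih]
    ring

end Lifting

lemma unitZeroSum_zero_eq_card (n : ℕ) (α₁ α₂ α₃ : ℤ) :
    unitZeroSum p n α₁ α₂ α₃ 0 = (unitZeros (α₁ : ZMod (p ^ n)) α₂ α₃).card := by
  simp [unitZeroSum]

lemma card_unitZeros_prime (hp2 : 2 < p) {α₁ α₂ α₃ : ℤ}
    (h1 : ¬ (p : ℤ) ∣ α₁) (h2 : ¬ (p : ℤ) ∣ α₂) (h3 : ¬ (p : ℤ) ∣ α₃) :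
    ((unitZeros (α₁ : ZMod (p ^ 1)) α₂ α₃).card : ℤ) =
      (p - (2 + legendreSym p (-(α₁ * α₂)) + legendreSym p (-(α₁ * α₃)) +
        legendreSym p (-(α₂ * α₃)))) * (p - 1) := by
  have hF : ringChar (ZMod p) ≠ 2 := by rw [ZMod.ringChar_zmod_n]; omega
  have hne {k : ℤ} (hk : ¬ (p : ℤ) ∣ k) : (k : ZMod p) ≠ 0 := by
    rwa [Ne, ZMod.intCast_zmod_eq_zero_iff_dvd]
  have hpow (q : ℕ) [NeZero q] (hq : q = p) : ((unitZeros (α₁ : ZMod q) α₂ α₃).card : ℤ) =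
      (unitZeros (α₁ : ZMod p) α₂ α₃).card := by
    subst hq
    congr!
  rw [hpow (p ^ 1) (pow_one p), card_unitZeros_field hF (hne h1) (hne h2) (hne h3), ZMod.card]
  simp [legendreSym]

/-- The density of unit zeros modulo `p ^ n`. -/
lemma unitZeroSum_zero_div {n : ℕ} (hn : n ≠ 0) (hp2 : 2 < p) {α₁ α₂ α₃ : ℤ}
    (h1 : ¬ (p : ℤ) ∣ α₁) (h2 : ¬ (p : ℤ) ∣ α₂) (h3 : ¬ (p : ℤ) ∣ α₃) :
    unitZeroSum p n α₁ α₂ α₃ 0 / ((p : ℂ) ^ n) ^ 2 =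
      (((p : ℝ) - ((2 + legendreSym p (-(α₁ * α₂)) + legendreSym p (-(α₁ * α₃))
            + legendreSym p (-(α₂ * α₃)) : ℤ) : ℝ)) * ((p : ℝ) - 1) / (p : ℝ) ^ 2 : ℝ) := by
  obtain ⟨k, rfl⟩ := Nat.exists_eq_add_of_le (Nat.one_le_iff_ne_zero.mpr hn)
  have hp0 : (p : ℂ) ≠ 0 := Nat.cast_ne_zero.mpr hp.out.ne_zero
  have hlift := unitZeroSum_add_prime_pow_smul (p := p) (α₂ := α₂) (α₃ := α₃) one_ne_zero hp2 h1 0 k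
  have hbase : (unitZeroSum p 1 α₁ α₂ α₃ 0 : ℂ) =
      (((p - (2 + legendreSym p (-(α₁ * α₂)) + legendreSym p (-(α₁ * α₃)) +
        legendreSym p (-(α₂ * α₃)))) * (p - 1) : ℤ) : ℂ) := by
    rw [unitZeroSum_zero_eq_card, ← card_unitZeros_prime hp2 h1 h2 h3, Int.cast_natCast]
  rw [smul_zero, hbase] at hlift
  rw [hlift]
  push_cast
  field_simp
  ring

section DualZeros

variable {α₁ α₂ α₃ : ℤ}

/-- The height of the coefficients of the dual form. -/
def dualHeight (α₁ α₂ α₃ : ℤ) : ℕ :=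
  (α₂ * α₃).natAbs + (α₁ * α₃).natAbs + (α₁ * α₂).natAbs

lemma abs_dual_bilin_le {Y : ℤ} (hY : 0 ≤ Y) {x₁ x₂ x₃ y₁ y₂ y₃ : ℤ} (hx₁ : |x₁| ≤ Y)
    (hx₂ : |x₂| ≤ Y) (hx₃ : |x₃| ≤ Y) (hy₁ : |y₁| ≤ Y) (hy₂ : |y₂| ≤ Y) (hy₃ : |y₃| ≤ Y) :
    |α₂ * α₃ * (x₁ * y₁) + α₁ * α₃ * (x₂ * y₂) + α₁ * α₂ * (x₃ * y₃)| ≤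
      dualHeight α₁ α₂ α₃ * Y ^ 2 := by
  have hmul {x y : ℤ} (hx : |x| ≤ Y) (hy : |y| ≤ Y) : |x * y| ≤ Y ^ 2 := by
    rw [abs_mul, sq]
    exact mul_le_mul hx hy (abs_nonneg _) hY
  calc _ ≤ |α₂ * α₃ * (x₁ * y₁)| + |α₁ * α₃ * (x₂ * y₂)| + |α₁ * α₂ * (x₃ * y₃)| :=
        abs_add_three _ _ _
    _ = |α₂ * α₃| * |x₁ * y₁| + |α₁ * α₃| * |x₂ * y₂| + |α₁ * α₂| * |x₃ * y₃| := by
        rw [abs_mul (α₂ * α₃), abs_mul (α₁ * α₃), abs_mul (α₁ * α₂)]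
    _ ≤ |α₂ * α₃| * Y ^ 2 + |α₁ * α₃| * Y ^ 2 + |α₁ * α₂| * Y ^ 2 := by
        gcongr <;> exact hmul ‹_› ‹_›
    _ = _ := by
        rw [dualHeight]
        push_cast
        ring

lemma one_le_dualHeight {p : ℕ} (h2 : ¬ (p : ℤ) ∣ α₂) (h3 : ¬ (p : ℤ) ∣ α₃) :
    1 ≤ dualHeight α₁ α₂ α₃ := by
  have h23 : α₂ * α₃ ≠ 0 := mul_ne_zero (by rintro rfl; exact h2 (dvd_zero _))
    (by rintro rfl; exact h3 (dvd_zero _))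
  have := Int.natAbs_pos.mpr h23
  rw [dualHeight]
  omega

/-- Two small zeros of the dual form which are proportional modulo `p ^ K` are proportional. -/
lemma proportional_of_modEq (hp2 : 2 < p) (h1 : ¬ (p : ℤ) ∣ α₁) (h2 : ¬ (p : ℤ) ∣ α₂)
    (h3 : ¬ (p : ℤ) ∣ α₃) {K Y : ℕ} (hK : dualHeight α₁ α₂ α₃ * Y ^ 2 < p ^ (2 * K))
    {m m' : ℤ × ℤ × ℤ} (hm : dualForm α₁ α₂ α₃ m = 0) (hm' : dualForm α₁ α₂ α₃ m' = 0)
    (hp₁ : ¬ (p : ℤ) ∣ m.1) (hp₃ : ¬ (p : ℤ) ∣ m.2.2)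
    (hp₁' : ¬ (p : ℤ) ∣ m'.1)
    (hY : |m.1| ≤ Y ∧ |m.2.1| ≤ Y ∧ |m.2.2| ≤ Y)
    (hY' : |m'.1| ≤ Y ∧ |m'.2.1| ≤ Y ∧ |m'.2.2| ≤ Y)
    (hx : (p : ℤ) ^ K ∣ m.2.1 * m'.1 - m.1 * m'.2.1)
    (hy : (p : ℤ) ^ K ∣ m.2.2 * m'.1 - m.1 * m'.2.2) :
    m.2.1 * m'.1 = m.1 * m'.2.1 ∧ m.2.2 * m'.1 = m.1 * m'.2.2 := by
  have hpZ : Prime (p : ℤ) := Nat.prime_iff_prime_int.mp hp.out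
  have hp2' : ¬ (p : ℤ) ∣ 2 := by exact_mod_cast Nat.not_dvd_of_pos_of_lt two_pos hp2
  have hne {k : ℤ} (hk : ¬ (p : ℤ) ∣ k) : k ≠ 0 := by rintro rfl; exact hk (dvd_zero _)
  rw [dualForm] at hm hm'
  set D := α₂ * α₃ * (m.1 * m'.1) + α₁ * α₃ * (m.2.1 * m'.2.1) + α₁ * α₂ * (m.2.2 * m'.2.2) with hD
  have hDdvd : (p : ℤ) ^ (2 * K) ∣ D := by
    have hcop : IsCoprime ((p : ℤ) ^ (2 * K)) (2 * m.1 * m'.1) := by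
      refine IsCoprime.pow_left ((Prime.coprime_iff_not_dvd hpZ).mpr ?_)
      simp [hpZ.dvd_mul, hp2', hp₁, hp₁']
    refine hcop.dvd_of_dvd_mul_left ?_
    have key : 2 * m.1 * m'.1 * D = -(α₁ * α₃ * (m.2.1 * m'.1 - m.1 * m'.2.1) ^ 2
        + α₁ * α₂ * (m.2.2 * m'.1 - m.1 * m'.2.2) ^ 2) := by
      linear_combination m'.1 ^ 2 * hm + m.1 ^ 2 * hm'
    rw [key, dvd_neg, mul_comm 2 K, pow_mul]
    exact dvd_add ((pow_dvd_pow_of_dvd hx 2).mul_left _) ((pow_dvd_pow_of_dvd hy 2).mul_left _)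
  have hD0 : D = 0 := by
    refine Int.eq_zero_of_abs_lt_dvd hDdvd (lt_of_le_of_lt (abs_dual_bilin_le (Y := Y)
      (by positivity) hY.1 hY.2.1 hY.2.2 hY'.1 hY'.2.1 hY'.2.2) ?_)
    exact_mod_cast hK
  set x := m.2.1 * m'.1 - m.1 * m'.2.1 with hxdef
  set y := m.2.2 * m'.1 - m.1 * m'.2.2 with hydef
  have e1 : α₁ * α₃ * m.2.1 * x + α₁ * α₂ * m.2.2 * y = 0 := by
    linear_combination m'.1 * hm - m.1 * hD0
  have e2 : α₁ * α₃ * m'.2.1 * x + α₁ * α₂ * m'.2.2 * y = 0 := by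
    linear_combination m'.1 * hD0 - m.1 * hm'
  have hx0 : x = 0 := by
    have hz : α₁ * α₃ * x * (m.2.1 * m'.2.2 - m.2.2 * m'.2.1) = 0 := by
      linear_combination m'.2.2 * e1 - m.2.2 * e2
    rcases mul_eq_zero.mp hz with h | h
    · simpa [hne h1, hne h3] using h
    · have hxy : m.2.1 * y = m.2.2 * x := by linear_combination -m.1 * h
      have : α₂ * α₃ * m.1 ^ 2 * x = 0 := by
        linear_combination x * hm - m.2.1 * e1 + α₁ * α₂ * m.2.2 * hxy
      simpa [hne h2, hne h3, hne hp₁] using this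
  have hy0 : y = 0 := by
    rw [hx0] at e1
    simpa [hne h1, hne h2, hne hp₃] using e1
  exact ⟨sub_eq_zero.mp hx0, sub_eq_zero.mp hy0⟩

lemma dvd_of_proportional {m m' : ℤ × ℤ × ℤ}
    (hm' : Int.gcd m'.1 (Int.gcd m'.2.1 m'.2.2) = 1)
    (h₂ : m.2.1 * m'.1 = m.1 * m'.2.1) (h₃ : m.2.2 * m'.1 = m.1 * m'.2.2) : m'.1 ∣ m.1 := by
  have hcop : IsCoprime m'.1 (Int.gcd m'.2.1 m'.2.2 : ℤ) := Int.isCoprime_iff_gcd_eq_one.mpr hm'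
  refine hcop.dvd_of_dvd_mul_right ?_
  rw [Int.gcd_eq_gcd_ab]
  exact ⟨m.2.1 * Int.gcdA m'.2.1 m'.2.2 + m.2.2 * Int.gcdB m'.2.1 m'.2.2, by
    linear_combination -(Int.gcdA m'.2.1 m'.2.2) * h₂ - (Int.gcdB m'.2.1 m'.2.2) * h₃⟩

lemma natAbs_eq_of_proportional {m m' : ℤ × ℤ × ℤ} (h0 : m.1 ≠ 0)
    (hm : Int.gcd m.1 (Int.gcd m.2.1 m.2.2) = 1)
    (hm' : Int.gcd m'.1 (Int.gcd m'.2.1 m'.2.2) = 1)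
    (h₂ : m.2.1 * m'.1 = m.1 * m'.2.1) (h₃ : m.2.2 * m'.1 = m.1 * m'.2.2) :
    m.1.natAbs = m'.1.natAbs ∧ m.2.1.natAbs = m'.2.1.natAbs ∧ m.2.2.natAbs = m'.2.2.natAbs := by
  have e1 : m.1.natAbs = m'.1.natAbs := Int.natAbs_eq_of_dvd_dvd
    (dvd_of_proportional hm (by linear_combination -h₂) (by linear_combination -h₃))
    (dvd_of_proportional hm' h₂ h₃)
  have hpos : 0 < m.1.natAbs := Int.natAbs_pos.mpr h0
  refine ⟨e1, ?_, ?_⟩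
  · have := congrArg Int.natAbs h₂
    rw [Int.natAbs_mul, Int.natAbs_mul, ← e1, mul_comm] at this
    exact Nat.eq_of_mul_eq_mul_left hpos this
  · have := congrArg Int.natAbs h₃
    rw [Int.natAbs_mul, Int.natAbs_mul, ← e1, mul_comm] at this
    exact Nat.eq_of_mul_eq_mul_left hpos this

/-- The zeros of the dual form of height at most `X` with coordinates prime to `p`. -/
noncomputable def dualZeros (p : ℕ) (α₁ α₂ α₃ : ℤ) (X : ℕ) : Finset (ℤ × ℤ × ℤ) :=
  {m ∈ Finset.Icc (-X : ℤ) X ×ˢ Finset.Icc (-X : ℤ) X ×ˢ Finset.Icc (-X : ℤ) X |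
    (¬ (p : ℤ) ∣ m.1 ∧ ¬ (p : ℤ) ∣ m.2.1 ∧ ¬ (p : ℤ) ∣ m.2.2) ∧ dualForm α₁ α₂ α₃ m = 0}

lemma mem_dualZeros {p X : ℕ} {m : ℤ × ℤ × ℤ} :
    m ∈ dualZeros p α₁ α₂ α₃ X ↔ (|m.1| ≤ X ∧ |m.2.1| ≤ X ∧ |m.2.2| ≤ X) ∧
      (¬ (p : ℤ) ∣ m.1 ∧ ¬ (p : ℤ) ∣ m.2.1 ∧ ¬ (p : ℤ) ∣ m.2.2) ∧ dualForm α₁ α₂ α₃ m = 0 := by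
  simp only [dualZeros, Finset.mem_filter, Finset.mem_product, Finset.mem_Icc, abs_le]

lemma card_primitive_dualZeros_le_of_lt (hp2 : 2 < p) (h1 : ¬ (p : ℤ) ∣ α₁) (h2 : ¬ (p : ℤ) ∣ α₂)
    (h3 : ¬ (p : ℤ) ∣ α₃) {K Y : ℕ} (hK0 : K ≠ 0)
    (hK : dualHeight α₁ α₂ α₃ * Y ^ 2 < p ^ (2 * K)) :
    Finset.card {m ∈ dualZeros p α₁ α₂ α₃ Y | Int.gcd m.1 (Int.gcd m.2.1 m.2.2) = 1} ≤
      8 * p ^ K := by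
  have hcard : Finset.card (Finset.univ : Finset (ZMod (p ^ K) × Bool × Bool × Bool)) =
      8 * p ^ K := by
    simp [ZMod.card, mul_comm]
  rw [← hcard]
  refine Finset.card_le_card_of_injOn (fun m => ((m.2.2 : ZMod (p ^ K)) * (m.1 : ZMod (p ^ K))⁻¹,
    decide (0 ≤ m.1), decide (0 ≤ m.2.1), decide (0 ≤ m.2.2))) (fun _ _ => Finset.mem_univ _) ?_
  intro m hm m' hm' heq
  simp only [Finset.coe_filter, Set.mem_ofPred_eq, mem_dualZeros] at hm hm'
  obtain ⟨⟨hY, ⟨hp₁, hp₂, hp₃⟩, hQ⟩, hg⟩ := hm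
  obtain ⟨⟨hY', ⟨hp₁', hp₂', hp₃'⟩, hQ'⟩, hg'⟩ := hm'
  simp only [Prod.mk.injEq, decide_eq_decide] at heq
  obtain ⟨hratio, hs₁, hs₂, hs₃⟩ := heq
  have hu {k : ℤ} (hk : ¬ (p : ℤ) ∣ k) : IsUnit (k : ZMod (p ^ K)) :=
    (ZMod.isUnit_intCast_pow_iff hK0 k).mpr hk
  have hinv := ZMod.mul_inv_of_unit _ (hu hp₁)
  have hinv' := ZMod.mul_inv_of_unit _ (hu hp₁')
  have hcross : (m.2.2 : ZMod (p ^ K)) * m'.1 = m.1 * m'.2.2 := by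
    linear_combination (m.1 : ZMod (p ^ K)) * m'.1 * hratio - m.2.2 * m'.1 * hinv
      + m'.2.2 * m.1 * hinv'
  have hsq : ((m.2.1 : ZMod (p ^ K)) * m'.1) ^ 2 = (m.1 * m'.2.1) ^ 2 := by
    have q : (α₂ : ZMod (p ^ K)) * α₃ * m.1 ^ 2 + α₁ * α₃ * m.2.1 ^ 2 + α₁ * α₂ * m.2.2 ^ 2 = 0 := by
      have := congrArg (Int.cast : ℤ → ZMod (p ^ K)) hQ
      rw [dualForm] at this
      push_cast at this
      exact this
    have q' : (α₂ : ZMod (p ^ K)) * α₃ * m'.1 ^ 2 + α₁ * α₃ * m'.2.1 ^ 2 + α₁ * α₂ * m'.2.2 ^ 2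
        = 0 := by
      have := congrArg (Int.cast : ℤ → ZMod (p ^ K)) hQ'
      rw [dualForm] at this
      push_cast at this
      exact this
    refine ((hu h1).mul (hu h3)).mul_left_cancel ?_
    linear_combination (m'.1 : ZMod (p ^ K)) ^ 2 * q - m.1 ^ 2 * q'
      - α₁ * α₂ * (m.2.2 * m'.1 + m.1 * m'.2.2) * hcross
  have hdvd {k : ℤ} (hk : (k : ZMod (p ^ K)) = 0) : (p : ℤ) ^ K ∣ k := by
    have := (ZMod.intCast_zmod_eq_zero_iff_dvd k (p ^ K)).mp hk
    exact_mod_cast this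
  have hy : (p : ℤ) ^ K ∣ m.2.2 * m'.1 - m.1 * m'.2.2 := hdvd (by push_cast; rw [hcross, sub_self])
  have habs : m.1.natAbs = m'.1.natAbs ∧ m.2.1.natAbs = m'.2.1.natAbs ∧
      m.2.2.natAbs = m'.2.2.natAbs := by
    have hm0 : m.1 ≠ 0 := by intro h; exact hp₁ (h ▸ dvd_zero _)
    rcases ZMod.eq_or_eq_neg_of_sq_eq_sq hp2 ((hu hp₂).mul (hu hp₁')) hsq with h | h
    · have hx : (p : ℤ) ^ K ∣ m.2.1 * m'.1 - m.1 * m'.2.1 := hdvd (by push_cast; rw [h, sub_self])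
      obtain ⟨e₂, e₃⟩ := proportional_of_modEq hp2 h1 h2 h3 hK hQ hQ' hp₁ hp₃ hp₁' hY hY' hx hy
      exact natAbs_eq_of_proportional hm0 hg hg' e₂ e₃
    · have hx : (p : ℤ) ^ K ∣ m.2.1 * m'.1 - m.1 * -m'.2.1 :=
        hdvd (by push_cast; rw [h]; ring)
      have hQ'' : dualForm α₁ α₂ α₃ (m'.1, -m'.2.1, m'.2.2) = 0 := by
        rw [← hQ', dualForm, dualForm]; ring
      obtain ⟨e₂, e₃⟩ := proportional_of_modEq (m' := (m'.1, -m'.2.1, m'.2.2)) hp2 h1 h2 h3 hK hQ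
        hQ'' hp₁ hp₃ hp₁' hY ⟨hY'.1, by rw [abs_neg]; exact hY'.2.1, hY'.2.2⟩ hx hy
      have := natAbs_eq_of_proportional (m' := (m'.1, -m'.2.1, m'.2.2)) hm0 hg
        (by simpa [Int.gcd_neg] using hg') e₂ e₃
      simpa using this
  obtain ⟨a₁, a₂, a₃⟩ := habs
  exact Prod.ext (by omega) (Prod.ext (by omega) (by omega))

lemma card_primitive_dualZeros_le (hp2 : 2 < p) (h1 : ¬ (p : ℤ) ∣ α₁) (h2 : ¬ (p : ℤ) ∣ α₂)
    (h3 : ¬ (p : ℤ) ∣ α₃) {Y : ℕ} (hY : Y ≠ 0) :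
    Finset.card {m ∈ dualZeros p α₁ α₂ α₃ Y | Int.gcd m.1 (Int.gcd m.2.1 m.2.2) = 1} ≤
      8 * p * dualHeight α₁ α₂ α₃ * Y := by
  set A := dualHeight α₁ α₂ α₃ with hA
  have hA0 : A ≠ 0 := Nat.one_le_iff_ne_zero.mp (one_le_dualHeight h2 h3)
  have hlt : A * Y < p ^ (Nat.log p (A * Y) + 1) := Nat.lt_pow_succ_log_self hp.out.one_lt _
  have hle : p ^ Nat.log p (A * Y) ≤ A * Y := Nat.pow_log_le_self p (mul_ne_zero hA0 hY)
  refine (card_primitive_dualZeros_le_of_lt hp2 h1 h2 h3 (Nat.succ_ne_zero (Nat.log p (A * Y)))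
    ?_).trans ?_
  · calc A * Y ^ 2 ≤ (A * Y) ^ 2 := by
          rw [mul_pow]
          exact Nat.mul_le_mul_right _ (Nat.le_self_pow two_ne_zero A)
      _ < (p ^ (Nat.log p (A * Y) + 1)) ^ 2 := Nat.pow_lt_pow_left hlt two_ne_zero
      _ = p ^ (2 * (Nat.log p (A * Y) + 1)) := by rw [← pow_mul, mul_comm]
  · calc 8 * p ^ (Nat.log p (A * Y) + 1) = 8 * p * p ^ Nat.log p (A * Y) := by ring
      _ ≤ 8 * p * (A * Y) := Nat.mul_le_mul_left _ hle
      _ = _ := by ring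

/-- The dual cone has `O(X log X)` integer points of height at most `X` with coordinates prime
to `p`. -/
lemma card_dualZeros_le (hp2 : 2 < p) (h1 : ¬ (p : ℤ) ∣ α₁) (h2 : ¬ (p : ℤ) ∣ α₂)
    (h3 : ¬ (p : ℤ) ∣ α₃) (X : ℕ) :
    ((dualZeros p α₁ α₂ α₃ X).card : ℝ) ≤
      8 * p * dualHeight α₁ α₂ α₃ * X * (1 + Real.log X) := by
  set A := dualHeight α₁ α₂ α₃ with hA
  have hsub : dualZeros p α₁ α₂ α₃ X ⊆ (Finset.Icc 1 X).biUnion fun d =>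
      ({m ∈ dualZeros p α₁ α₂ α₃ (X / d) | Int.gcd m.1 (Int.gcd m.2.1 m.2.2) = 1}).image
        fun m => (d : ℤ) • m := by
    intro m hm
    rw [mem_dualZeros] at hm
    obtain ⟨hX, ⟨hp₁, hp₂, hp₃⟩, hQ⟩ := hm
    have hm0 : m.1 ≠ 0 := by intro h; exact hp₁ (h ▸ dvd_zero _)
    set d := Int.gcd m.1 (Int.gcd m.2.1 m.2.2) with hd
    have hdpos : 0 < d := Int.gcd_pos_of_ne_zero_left _ hm0
    have hd0 : (d : ℤ) ≠ 0 := by exact_mod_cast hdpos.ne'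
    obtain ⟨u₁, hu₁⟩ : (d : ℤ) ∣ m.1 := Int.gcd_dvd_left _ _
    have hd' : (d : ℤ) ∣ (Int.gcd m.2.1 m.2.2 : ℤ) := Int.gcd_dvd_right _ _
    obtain ⟨u₂, hu₂⟩ : (d : ℤ) ∣ m.2.1 := hd'.trans (Int.gcd_dvd_left _ _)
    obtain ⟨u₃, hu₃⟩ : (d : ℤ) ∣ m.2.2 := hd'.trans (Int.gcd_dvd_right _ _)
    have hbound {x u : ℤ} (hx : |x| ≤ X) (hxu : x = d * u) : |u| ≤ ((X / d : ℕ) : ℤ) := by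
      rw [Int.abs_eq_natAbs] at hx ⊢
      rw [hxu, Int.natAbs_mul, Int.natAbs_natCast] at hx
      norm_cast at hx ⊢
      rw [Nat.le_div_iff_mul_le hdpos, mul_comm]
      exact hx
    have hndvd {x u : ℤ} (hx : ¬ (p : ℤ) ∣ x) (hxu : x = d * u) : ¬ (p : ℤ) ∣ u :=
      fun h => hx (hxu ▸ h.mul_left _)
    have hdX : d ≤ X := by
      have h := Nat.le_of_dvd (Int.natAbs_pos.mpr hm0) (Int.natCast_dvd.mp ⟨u₁, hu₁⟩)
      have hX₁ := hX.1
      rw [Int.abs_eq_natAbs] at hX₁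
      exact_mod_cast (Nat.cast_le (α := ℤ).mpr h).trans hX₁
    have hgcd : Int.gcd u₁ (Int.gcd u₂ u₃) = 1 := by
      have h : d = d * Int.gcd u₁ (Int.gcd u₂ u₃) := by
        conv_lhs => rw [hd, hu₁, hu₂, hu₃]
        rw [Int.gcd_mul_left, Int.natAbs_natCast]
        push_cast
        rw [Int.gcd_mul_left, Int.natAbs_natCast]
      exact Nat.eq_of_mul_eq_mul_left hdpos (by rw [mul_one]; exact h.symm)
    refine Finset.mem_biUnion.mpr ⟨d, Finset.mem_Icc.mpr ⟨hdpos, hdX⟩,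
      Finset.mem_image.mpr ⟨(u₁, u₂, u₃), Finset.mem_filter.mpr ⟨mem_dualZeros.mpr
        ⟨⟨hbound hX.1 hu₁, hbound hX.2.1 hu₂, hbound hX.2.2 hu₃⟩,
          ⟨hndvd hp₁ hu₁, hndvd hp₂ hu₂, hndvd hp₃ hu₃⟩, ?_⟩, hgcd⟩, ?_⟩⟩
    · rw [dualForm, hu₁, hu₂, hu₃] at hQ
      refine (mul_eq_zero.mp (?_ : (d : ℤ) ^ 2 * _ = 0)).resolve_left (pow_ne_zero 2 hd0)
      rw [dualForm]
      linear_combination hQ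
    · exact Prod.ext hu₁.symm (Prod.ext hu₂.symm hu₃.symm)
  have hcard : (dualZeros p α₁ α₂ α₃ X).card ≤ ∑ d ∈ Finset.Icc 1 X, 8 * p * A * (X / d) := by
    refine (Finset.card_le_card hsub).trans (Finset.card_biUnion_le.trans
      (Finset.sum_le_sum fun d hd => Finset.card_image_le.trans ?_))
    rw [Finset.mem_Icc] at hd
    exact card_primitive_dualZeros_le hp2 h1 h2 h3 (Nat.div_pos hd.2 hd.1).ne'
  calc ((dualZeros p α₁ α₂ α₃ X).card : ℝ)
      ≤ ((∑ d ∈ Finset.Icc 1 X, 8 * p * A * (X / d) : ℕ) : ℝ) := by exact_mod_cast hcard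
    _ ≤ ∑ d ∈ Finset.Icc 1 X, 8 * p * A * ((X : ℝ) * (d : ℝ)⁻¹) := by
        push_cast
        refine Finset.sum_le_sum fun d _ => mul_le_mul_of_nonneg_left ?_ (by positivity)
        rw [← div_eq_mul_inv]
        exact Nat.cast_div_le
    _ = 8 * p * A * X * (harmonic X : ℝ) := by
        rw [harmonic_eq_sum_Icc]
        push_cast
        rw [← Finset.mul_sum, ← Finset.mul_sum]
        ring
    _ ≤ _ := mul_le_mul_of_nonneg_left (harmonic_le_one_add_log X) (by positivity)

end DualZeros

section NearFrequencies

variable {α₁ α₂ α₃ : ℤ}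

lemma exists_eq_prime_pow_smul {m : ℤ × ℤ × ℤ} (hm : m ≠ 0) :
    ∃ (k : ℕ) (u : ℤ × ℤ × ℤ), m = (p : ℤ) ^ k • u ∧
      ¬ ((p : ℤ) ∣ u.1 ∧ (p : ℤ) ∣ u.2.1 ∧ (p : ℤ) ∣ u.2.2) := by
  have hg : Int.gcd m.1 (Int.gcd m.2.1 m.2.2) ≠ 0 := by
    intro h
    rw [Int.gcd_eq_zero_iff, Int.natCast_eq_zero, Int.gcd_eq_zero_iff] at h
    exact hm (Prod.ext h.1 (Prod.ext h.2.1 h.2.2))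
  obtain ⟨k, g, hpg, hk⟩ := Nat.exists_eq_pow_mul_and_not_dvd hg p hp.out.ne_one
  have hpk : ((p ^ k : ℕ) : ℤ) ∣ (Int.gcd m.1 (Int.gcd m.2.1 m.2.2) : ℤ) := by
    rw [hk]; exact_mod_cast Dvd.intro _ rfl
  have hpk' := hpk.trans (Int.gcd_dvd_right _ _)
  obtain ⟨u₁, hu₁⟩ := hpk.trans (Int.gcd_dvd_left _ _)
  obtain ⟨u₂, hu₂⟩ := hpk'.trans (Int.gcd_dvd_left _ _)
  obtain ⟨u₃, hu₃⟩ := hpk'.trans (Int.gcd_dvd_right _ _)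
  push_cast at hu₁ hu₂ hu₃
  refine ⟨k, (u₁, u₂, u₃), Prod.ext hu₁ (Prod.ext hu₂ hu₃), fun ⟨d₁, d₂, d₃⟩ => hpg ?_⟩
  have hdvd {x u : ℤ} (hx : x = (p : ℤ) ^ k * u) (hu : (p : ℤ) ∣ u) : (p : ℤ) ^ (k + 1) ∣ x := by
    rw [hx, pow_succ]
    exact mul_dvd_mul_left _ hu
  have hall : (p : ℤ) ^ (k + 1) ∣ (Int.gcd m.1 (Int.gcd m.2.1 m.2.2) : ℤ) :=
    Int.dvd_coe_gcd (hdvd hu₁ d₁) (Int.dvd_coe_gcd (hdvd hu₂ d₂) (hdvd hu₃ d₃))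
  rw [hk, pow_succ] at hall
  have hall' : p ^ k * p ∣ p ^ k * g := by exact_mod_cast hall
  exact (Nat.mul_dvd_mul_iff_left (pow_pos hp.out.pos k)).mp hall'

/-- A small frequency whose exponential sum does not vanish is a power of `p` times a zero of the
dual form. -/
lemma exists_dualZeros_of_unitZeroSum_ne_zero (hp2 : 2 < p) (h1 : ¬ (p : ℤ) ∣ α₁)
    (h2 : ¬ (p : ℤ) ∣ α₂) (h3 : ¬ (p : ℤ) ∣ α₃) {n R : ℕ}
    (hR : dualHeight α₁ α₂ α₃ * R ^ 2 < p ^ (n - 1)) {m : ℤ × ℤ × ℤ} (hm : m ≠ 0)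
    (hmR : |m.1| ≤ R ∧ |m.2.1| ≤ R ∧ |m.2.2| ≤ R) (hsum : unitZeroSum p n α₁ α₂ α₃ m ≠ 0) :
    ∃ k < n, (∃ u ∈ dualZeros p α₁ α₂ α₃ (R / p ^ k), (p : ℤ) ^ k • u = m) ∧
      ‖unitZeroSum p n α₁ α₂ α₃ m‖ ≤ 2 * (p : ℝ) ^ (2 * n - (n - k) / 2) := by
  have hA := one_le_dualHeight (α₁ := α₁) h2 h3
  obtain ⟨k, u, rfl, hu⟩ := exists_eq_prime_pow_smul (p := p) hm
  have hpk : 0 < p ^ k := pow_pos hp.out.pos k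
  have hbound {x : ℤ} (hx : |(p : ℤ) ^ k * x| ≤ R) : |x| ≤ ((R / p ^ k : ℕ) : ℤ) := by
    rw [Int.abs_eq_natAbs] at hx ⊢
    rw [Int.natAbs_mul, Int.natAbs_pow, Int.natAbs_natCast] at hx
    norm_cast at hx ⊢
    rw [Nat.le_div_iff_mul_le hpk, mul_comm]
    exact hx
  have b₁ := hbound hmR.1
  have b₂ := hbound hmR.2.1
  have b₃ := hbound hmR.2.2
  have hdiv : R / p ^ k ≠ 0 := by
    intro h
    rw [h] at b₁ b₂ b₃
    simp only [Nat.cast_zero, abs_nonpos_iff] at b₁ b₂ b₃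
    exact hu (by rw [b₁, b₂, b₃]; simp)
  have hkR : p ^ k ≤ R := by
    by_contra h
    exact hdiv (Nat.div_eq_of_lt (not_le.mp h))
  have hkn : 2 * k < n - 1 := by
    refine (Nat.pow_lt_pow_iff_right hp.out.one_lt).mp (lt_of_le_of_lt ?_ hR)
    calc p ^ (2 * k) = (p ^ k) ^ 2 := by rw [← pow_mul, mul_comm]
      _ ≤ R ^ 2 := Nat.pow_le_pow_left hkR 2
      _ ≤ _ := Nat.le_mul_of_pos_left _ hA
  obtain ⟨j, rfl⟩ : ∃ j, n = j + k := ⟨n - k, by omega⟩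
  have hj : 2 ≤ j := by omega
  rw [unitZeroSum_add_prime_pow_smul (by omega) hp2 h1] at hsum ⊢
  obtain ⟨hpu, hdvd, hnorm⟩ := unitZeroSum_ne_zero hj hp2 h1 h2 h3 hu (right_ne_zero_of_mul hsum)
  refine ⟨k, by omega, ⟨u, mem_dualZeros.mpr ⟨⟨b₁, b₂, b₃⟩, hpu, ?_⟩, rfl⟩, ?_⟩
  · refine Int.eq_zero_of_abs_lt_dvd hdvd ?_
    have hle := abs_dual_bilin_le (α₁ := α₁) (α₂ := α₂) (α₃ := α₃) (by positivity) b₁ b₂ b₃ b₁ b₂ b₃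
    rw [← sq, ← sq, ← sq] at hle
    refine lt_of_le_of_lt hle ?_
    have hlt : dualHeight α₁ α₂ α₃ * (R / p ^ k) ^ 2 < p ^ (j - 1) := by
      refine lt_of_mul_lt_mul_right
        (lt_of_le_of_lt (b := dualHeight α₁ α₂ α₃ * R ^ 2) ?_ ?_) hpk.le
      · rw [mul_assoc]
        refine Nat.mul_le_mul_left _ ?_
        calc (R / p ^ k) ^ 2 * p ^ k ≤ (R / p ^ k) ^ 2 * (p ^ k) ^ 2 :=
              Nat.mul_le_mul_left _ (Nat.le_self_pow two_ne_zero _)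
          _ = (R / p ^ k * p ^ k) ^ 2 := by rw [mul_pow]
          _ ≤ R ^ 2 := Nat.pow_le_pow_left (Nat.div_mul_le_self _ _) 2
      · rwa [← pow_add, show j - 1 + k = j + k - 1 by omega]
    exact_mod_cast hlt
  · rw [norm_mul, norm_pow, Complex.norm_natCast]
    calc (p : ℝ) ^ (2 * k) * ‖unitZeroSum p j α₁ α₂ α₃ u‖
        ≤ (p : ℝ) ^ (2 * k) * (2 * (p : ℝ) ^ (2 * j - j / 2)) := by gcongr
      _ = 2 * (p : ℝ) ^ (2 * k + (2 * j - j / 2)) := by rw [pow_add]; ring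
      _ = _ := by congr 2; omega

/-- The exponential sums over all nonzero frequencies of height at most `R` are small on
average. -/
lemma sum_norm_unitZeroSum_le (hp2 : 2 < p) (h1 : ¬ (p : ℤ) ∣ α₁)
    (h2 : ¬ (p : ℤ) ∣ α₂) (h3 : ¬ (p : ℤ) ∣ α₃) {n R : ℕ}
    (hR : dualHeight α₁ α₂ α₃ * R ^ 2 < p ^ (n - 1)) (S : Finset (ℤ × ℤ × ℤ))
    (hS : ∀ m ∈ S, m ≠ 0 ∧ |m.1| ≤ R ∧ |m.2.1| ≤ R ∧ |m.2.2| ≤ R) :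
    ∑ m ∈ S, ‖unitZeroSum p n α₁ α₂ α₃ m‖ ≤
      16 * p * dualHeight α₁ α₂ α₃ * n * R * (1 + Real.log R) * (p : ℝ) ^ (2 * n - n / 2) := by
  classical
  set A := dualHeight α₁ α₂ α₃
  have hp0 : (0 : ℝ) < p := by exact_mod_cast hp.out.pos
  let T (k : ℕ) : Finset (ℤ × ℤ × ℤ) :=
    (dualZeros p α₁ α₂ α₃ (R / p ^ k)).image fun u => (p : ℤ) ^ k • u
  let B (k : ℕ) : ℝ := 2 * (p : ℝ) ^ (2 * n - (n - k) / 2)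
  have hB (k : ℕ) : 0 ≤ B k := by positivity
  have hterm (m : ℤ × ℤ × ℤ) (hm : m ∈ S) : ‖unitZeroSum p n α₁ α₂ α₃ m‖ ≤
      ∑ k ∈ Finset.range n, if m ∈ T k then B k else 0 := by
    have hnn (k : ℕ) : 0 ≤ if m ∈ T k then B k else 0 := by
      split_ifs
      exacts [hB k, le_rfl]
    by_cases hsum : unitZeroSum p n α₁ α₂ α₃ m = 0
    · rw [hsum, norm_zero]
      exact Finset.sum_nonneg fun k _ => hnn k
    · obtain ⟨k, hk, ⟨u, hu, hum⟩, hle⟩ := exists_dualZeros_of_unitZeroSum_ne_zero hp2 h1 h2 h3 hR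
        (hS m hm).1 (hS m hm).2 hsum
      have hmT : m ∈ T k := Finset.mem_image.mpr ⟨u, hu, hum⟩
      refine le_trans ?_ (Finset.single_le_sum (fun k _ => hnn k) (Finset.mem_range.mpr hk))
      rw [if_pos hmT]
      exact hle
  have hcard (k : ℕ) : ((T k).card : ℝ) * B k ≤
      16 * p * A * R * (1 + Real.log R) * (p : ℝ) ^ (2 * n - n / 2) := by
    have hRk : ((R / p ^ k : ℕ) : ℝ) ≤ R / p ^ k := by
      exact_mod_cast Nat.cast_div_le (α := ℝ) (m := R) (n := p ^ k)
    have hlog : Real.log ((R / p ^ k : ℕ) : ℝ) ≤ Real.log R := by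
      rcases Nat.eq_zero_or_pos (R / p ^ k) with h | h
      · rw [h, Nat.cast_zero, Real.log_zero]
        exact Real.log_natCast_nonneg R
      · exact Real.log_le_log (by exact_mod_cast h) (by exact_mod_cast Nat.div_le_self R (p ^ k))
    have hlog0 := Real.log_natCast_nonneg (R / p ^ k)
    have hpow : (p : ℝ) ^ (2 * n - (n - k) / 2) ≤ (p : ℝ) ^ (2 * n - n / 2) * (p : ℝ) ^ k := by
      rw [← pow_add]
      exact pow_le_pow_right₀ (by exact_mod_cast hp.out.one_le) (by omega)
    calc ((T k).card : ℝ) * B k ≤ (8 * p * A * ((R / p ^ k : ℕ) : ℝ) *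
          (1 + Real.log ((R / p ^ k : ℕ) : ℝ))) * B k := by
          refine mul_le_mul_of_nonneg_right (le_trans ?_ (card_dualZeros_le hp2 h1 h2 h3 _)) (hB k)
          exact_mod_cast Finset.card_image_le
      _ ≤ (8 * p * A * (R / p ^ k) * (1 + Real.log R)) *
          (2 * ((p : ℝ) ^ (2 * n - n / 2) * (p : ℝ) ^ k)) := by
          dsimp only [B]
          gcongr
      _ = _ := by
          field_simp
          ring
  calc ∑ m ∈ S, ‖unitZeroSum p n α₁ α₂ α₃ m‖
      ≤ ∑ m ∈ S, ∑ k ∈ Finset.range n, (if m ∈ T k then B k else 0) := Finset.sum_le_sum hterm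
    _ = ∑ k ∈ Finset.range n, ((S.filter (· ∈ T k)).card : ℝ) * B k := by
        rw [Finset.sum_comm]
        simp_rw [← Finset.sum_filter, Finset.sum_const, nsmul_eq_mul]
    _ ≤ ∑ k ∈ Finset.range n,
          16 * p * A * R * (1 + Real.log R) * (p : ℝ) ^ (2 * n - n / 2) := by
        refine Finset.sum_le_sum fun k _ => le_trans ?_ (hcard k)
        refine mul_le_mul_of_nonneg_right ?_ (hB k)
        exact_mod_cast Finset.card_le_card fun m hm => (Finset.mem_filter.mp hm).2
    _ = _ := by
        rw [Finset.sum_const, Finset.card_range, nsmul_eq_mul]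
        ring

end NearFrequencies

section Identity

variable {α₁ α₂ α₃ : ℤ}

lemma mem_unitZeros_intCast_iff {n : ℕ} (hn : n ≠ 0) (x : ℤ × ℤ × ℤ) :
    ((x.1, x.2.1, x.2.2) : ZMod (p ^ n) × ZMod (p ^ n) × ZMod (p ^ n)) ∈
        unitZeros (α₁ : ZMod (p ^ n)) α₂ α₃ ↔
      Int.gcd (x.1 * x.2.1 * x.2.2) p = 1 ∧
        (p : ℤ) ^ n ∣ α₁ * x.1 ^ 2 + α₂ * x.2.1 ^ 2 + α₃ * x.2.2 ^ 2 := by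
  have hpZ : Prime (p : ℤ) := Nat.prime_iff_prime_int.mp hp.out
  have hgcd : Int.gcd (x.1 * x.2.1 * x.2.2) p = 1 ↔
      ¬ (p : ℤ) ∣ x.1 ∧ ¬ (p : ℤ) ∣ x.2.1 ∧ ¬ (p : ℤ) ∣ x.2.2 := by
    rw [← Int.isCoprime_iff_gcd_eq_one, isCoprime_comm, Prime.coprime_iff_not_dvd hpZ,
      hpZ.dvd_mul, hpZ.dvd_mul]
    tauto
  have hdvd : (p : ℤ) ^ n ∣ α₁ * x.1 ^ 2 + α₂ * x.2.1 ^ 2 + α₃ * x.2.2 ^ 2 ↔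
      (α₁ : ZMod (p ^ n)) * x.1 ^ 2 + α₂ * x.2.1 ^ 2 + α₃ * x.2.2 ^ 2 = 0 := by
    rw [← Nat.cast_pow, ← ZMod.intCast_zmod_eq_zero_iff_dvd]
    push_cast
    rfl
  simp only [mem_unitZeros, ZMod.isUnit_intCast_pow_iff hn, hgcd, hdvd, and_assoc]

/-- The smoothed count of unit solutions as a sum over dual frequencies. -/
lemma smoothed_count_eq_tsum_unitZeroSum (f : 𝓢(ℝ, ℂ)) {n : ℕ} (hn : n ≠ 0) {N : ℝ} (hN : 0 < N) :
    ∑' x : ℤ × ℤ × ℤ, (if Int.gcd (x.1 * x.2.1 * x.2.2) p = 1 ∧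
        (p : ℤ) ^ n ∣ α₁ * x.1 ^ 2 + α₂ * x.2.1 ^ 2 + α₃ * x.2.2 ^ 2
      then f (x.1 / N) * f (x.2.1 / N) * f (x.2.2 / N) else 0) =
    ((N / (p : ℝ) ^ n : ℝ) : ℂ) ^ 3 * ∑' m : ℤ × ℤ × ℤ, 𝓕 f (N / (p : ℝ) ^ n * m.1) *
      𝓕 f (N / (p : ℝ) ^ n * m.2.1) * 𝓕 f (N / (p : ℝ) ^ n * m.2.2) *
        unitZeroSum p n α₁ α₂ α₃ m := by
  classical
  have hp0 : (0 : ℝ) < p := by exact_mod_cast hp.out.pos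
  set c : ℝ := N / (p : ℝ) ^ n with hc
  have hc0 : c ≠ 0 := by positivity
  let Z := unitZeros (α₁ : ZMod (p ^ n)) α₂ α₃
  let F (a : ZMod (p ^ n)) (x : ℤ) : ℂ := if (x : ZMod (p ^ n)) = a then f (x / N) else 0
  let G (a : ZMod (p ^ n)) (k : ℤ) : ℂ := 𝓕 f (c * k) * ZMod.stdAddChar ((k : ZMod (p ^ n)) * a)
  have hF (a : ZMod (p ^ n)) : Summable fun x => ‖F a x‖ := by
    refine Summable.of_nonneg_of_le (fun _ => norm_nonneg _) (fun x => ?_)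
      (f.summable_norm_int_mul (inv_ne_zero hN.ne'))
    dsimp only [F]
    split_ifs
    · rw [div_eq_inv_mul]
    · rw [norm_zero]
      exact norm_nonneg _
  have hG (a : ZMod (p ^ n)) : Summable fun k => ‖G a k‖ := by
    refine ((𝓕 f).summable_norm_int_mul hc0).congr fun k => ?_
    rw [norm_mul, AddChar.norm_apply, mul_one]
  have hFG (a : ZMod (p ^ n)) : ∑' x, F a x = c * ∑' k, G a k := by
    have := f.tsum_residue_eq hN a
    rw [Nat.cast_pow, ← hc] at this
    exact this
  calc _ = ∑' x : ℤ × ℤ × ℤ, ∑ a ∈ Z, F a.1 x.1 * F a.2.1 x.2.1 * F a.2.2 x.2.2 := by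
        refine tsum_congr fun x => ?_
        have hpt (a : ZMod (p ^ n) × ZMod (p ^ n) × ZMod (p ^ n)) :
            F a.1 x.1 * F a.2.1 x.2.1 * F a.2.2 x.2.2 =
              if ((x.1, x.2.1, x.2.2) : ZMod (p ^ n) × ZMod (p ^ n) × ZMod (p ^ n)) = a
              then f (x.1 / N) * f (x.2.1 / N) * f (x.2.2 / N) else 0 := by
          simp only [F, ite_mul, zero_mul, mul_ite, mul_zero, Prod.ext_iff, ite_and]
          split_ifs <;> rfl
        simp_rw [hpt, Finset.sum_ite_eq, Z, mem_unitZeros_intCast_iff hn]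
    _ = ∑ a ∈ Z, (∑' k, F a.1 k) * (∑' k, F a.2.1 k) * ∑' k, F a.2.2 k :=
        tsum_sum_mul_three Z (u := fun a => F a.1) (v := fun a => F a.2.1) (w := fun a => F a.2.2)
          (fun a => hF a.1) (fun a => hF a.2.1) (fun a => hF a.2.2)
    _ = (c : ℂ) ^ 3 * ∑ a ∈ Z, (∑' k, G a.1 k) * (∑' k, G a.2.1 k) * ∑' k, G a.2.2 k := by
        rw [Finset.mul_sum]
        refine Finset.sum_congr rfl fun a _ => ?_
        rw [hFG, hFG, hFG]
        ring
    _ = (c : ℂ) ^ 3 * ∑' m : ℤ × ℤ × ℤ, ∑ a ∈ Z, G a.1 m.1 * G a.2.1 m.2.1 * G a.2.2 m.2.2 := by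
        rw [tsum_sum_mul_three Z (u := fun a => G a.1) (v := fun a => G a.2.1)
          (w := fun a => G a.2.2) (fun a => hG a.1) (fun a => hG a.2.1) (fun a => hG a.2.2)]
    _ = _ := by
        congr 1
        refine tsum_congr fun m => ?_
        rw [unitZeroSum, Finset.mul_sum]
        refine Finset.sum_congr rfl fun a _ => ?_
        rw [AddChar.map_add_eq_mul, AddChar.map_add_eq_mul]
        ring

end Identity

section ErrorTerm

variable {α₁ α₂ α₃ : ℤ}

lemma summable_one_div_one_add_int_sq : Summable fun k : ℤ => 1 / (1 + (k : ℝ) ^ 2) := by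
  refine Summable.of_norm_bounded_eventually (Real.summable_one_div_int_pow.mpr one_lt_two) ?_
  rw [Filter.eventually_cofinite]
  refine (Set.finite_singleton (0 : ℤ)).subset fun k hk => ?_
  by_contra hk0
  have hk' : (k : ℝ) ≠ 0 := by exact_mod_cast hk0
  refine hk ?_
  rw [Real.norm_of_nonneg (by positivity)]
  exact one_div_le_one_div_of_le (by positivity) (by linarith)

/-- Decay of a Schwartz function along the dilated lattice `ρℤ`. -/
lemma SchwartzMap.exists_decay_on_lattice (g : 𝓢(ℝ, ℂ)) {ε : ℝ} (hε : 0 < ε) :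
    ∃ C : ℝ, 0 < C ∧ ∀ q ρ : ℝ, 1 ≤ q → q ^ (-(1 / 2) + ε) ≤ ρ → ∀ k : ℤ,
      ‖g (ρ * k)‖ ≤ C ∧ ‖g (ρ * k)‖ ≤ C * q * (1 / (1 + (k : ℝ) ^ 2)) ∧
      (q ^ (1 / 2 - ε / 2) ≤ |(k : ℝ)| → ‖g (ρ * k)‖ ≤ C / q ^ 3 * (1 / (1 + (k : ℝ) ^ 2))) := by
  obtain ⟨B, hB⟩ := exists_nat_ge (8 / ε)
  obtain ⟨C₀, hC₀, h₀⟩ := g.exists_norm_mul_le 0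
  obtain ⟨C₂, hC₂, h₂⟩ := g.exists_norm_mul_le 2
  obtain ⟨C₃, hC₃, h₃⟩ := g.exists_norm_mul_le (B + 2)
  refine ⟨C₀ + C₂ + 2 * C₃, by positivity, fun q ρ hq hρ k => ?_⟩
  have hq0 : 0 < q := by linarith
  have hρ0 : 0 < ρ := lt_of_lt_of_le (Real.rpow_pos_of_pos hq0 _) hρ
  specialize h₀ (ρ * k)
  specialize h₂ (ρ * k)
  specialize h₃ (ρ * k)
  rw [pow_zero, one_mul] at h₀
  rw [sq_abs] at h₂
  set G := ‖g (ρ * k)‖ with hG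
  have hG0 : 0 ≤ G := norm_nonneg _
  have hqρ : 1 ≤ q * ρ ^ 2 := by
    calc 1 ≤ q ^ (2 * ε) := Real.one_le_rpow hq (by positivity)
      _ = q * (q ^ (-(1 / 2) + ε)) ^ 2 := by
          rw [← Real.rpow_natCast, ← Real.rpow_mul hq0.le, ← Real.rpow_one_add' hq0.le]
          · congr 1; push_cast; ring
          · push_cast; ring_nf; positivity
      _ ≤ q * ρ ^ 2 := by gcongr
  have hk : (k : ℝ) ^ 2 * G ≤ q * ((ρ * k) ^ 2 * G) := by
    calc (k : ℝ) ^ 2 * G = 1 * ((k : ℝ) ^ 2 * G) := (one_mul _).symm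
      _ ≤ q * ρ ^ 2 * ((k : ℝ) ^ 2 * G) := by gcongr
      _ = _ := by ring
  refine ⟨by linarith, ?_, fun hkR => ?_⟩
  · rw [mul_one_div, le_div_iff₀ (by positivity)]
    have : q * ((ρ * k) ^ 2 * G) ≤ q * C₂ := by gcongr
    nlinarith
  · have hkpos : 0 < |(k : ℝ)| := lt_of_lt_of_le (Real.rpow_pos_of_pos hq0 _) hkR
    have hk1 : (1 : ℝ) ≤ (k : ℝ) ^ 2 := by
      have : 0 < |k| := by exact_mod_cast hkpos
      rw [← sq_abs]
      exact one_le_pow₀ (by exact_mod_cast this)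
    have hlow : q ^ (ε / 2) ≤ |ρ * k| := by
      rw [abs_mul, abs_of_pos hρ0]
      calc q ^ (ε / 2) = q ^ (-(1 / 2) + ε) * q ^ (1 / 2 - ε / 2) := by
            rw [← Real.rpow_add hq0]; congr 1; ring
        _ ≤ _ := by gcongr
    have hq4 : q ^ 4 ≤ |ρ * k| ^ B := by
      calc q ^ 4 = q ^ (4 : ℝ) := by norm_cast
        _ ≤ q ^ (ε / 2 * B) := by
            refine Real.rpow_le_rpow_of_exponent_le hq ?_
            rw [div_le_iff₀ hε] at hB
            linarith
        _ = (q ^ (ε / 2)) ^ B := by rw [Real.rpow_mul hq0.le, Real.rpow_natCast]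
        _ ≤ _ := by gcongr
    rw [div_mul_div_comm, mul_one, le_div_iff₀ (by positivity)]
    calc G * (q ^ 3 * (1 + (k : ℝ) ^ 2)) ≤ G * (q ^ 3 * ((k : ℝ) ^ 2 + (k : ℝ) ^ 2)) := by gcongr
      _ = 2 * q ^ 3 * ((k : ℝ) ^ 2 * G) := by ring
      _ ≤ 2 * q ^ 3 * (q * ((ρ * k) ^ 2 * G)) := by gcongr
      _ = 2 * (q ^ 4 * |ρ * k| ^ 2 * G) := by rw [sq_abs]; ring
      _ ≤ 2 * (|ρ * k| ^ B * |ρ * k| ^ 2 * G) := by gcongr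
      _ = 2 * (|ρ * k| ^ (B + 2) * G) := by ring
      _ ≤ _ := by linarith

lemma norm_unitZeroSum_le (n : ℕ) (m : ℤ × ℤ × ℤ) :
    ‖unitZeroSum p n α₁ α₂ α₃ m‖ ≤ ‖unitZeroSum p n α₁ α₂ α₃ 0‖ := by
  rw [unitZeroSum_zero_eq_card, Complex.norm_natCast, unitZeroSum]
  refine (norm_sum_le _ _).trans (le_of_eq ?_)
  simp only [AddChar.norm_apply, Finset.sum_const, nsmul_eq_mul, mul_one]

/-- The nonzero frequencies contribute little when the weights decay rapidly beyond height `R`. -/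
lemma norm_tsum_mul_unitZeroSum_sub_le (hp2 : 2 < p) (h1 : ¬ (p : ℤ) ∣ α₁)
    (h2 : ¬ (p : ℤ) ∣ α₂) (h3 : ¬ (p : ℤ) ∣ α₃) {n R : ℕ}
    (hR : dualHeight α₁ α₂ α₃ * R ^ 2 < p ^ (n - 1)) {w : ℤ → ℂ} {C : ℝ} (hC : 0 < C)
    (hw : ∀ k, ‖w k‖ ≤ C) (hw' : ∀ k, ‖w k‖ ≤ C * (p : ℝ) ^ n * (1 / (1 + (k : ℝ) ^ 2)))
    (hfar : ∀ k : ℤ, (R : ℤ) < |k| → ‖w k‖ ≤ C / ((p : ℝ) ^ n) ^ 3 * (1 / (1 + (k : ℝ) ^ 2))) :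
    ‖∑' m : ℤ × ℤ × ℤ, w m.1 * w m.2.1 * w m.2.2 * unitZeroSum p n α₁ α₂ α₃ m -
        w 0 ^ 3 * unitZeroSum p n α₁ α₂ α₃ 0‖ ≤
      C ^ 3 * (16 * p * dualHeight α₁ α₂ α₃ * n * R * (1 + Real.log R) *
        (p : ℝ) ^ (2 * n - n / 2)) +
      C ^ 3 / (p : ℝ) ^ n * ‖unitZeroSum p n α₁ α₂ α₃ 0‖ *
        ∑' m : ℤ × ℤ × ℤ, 1 / (1 + (m.1 : ℝ) ^ 2) * (1 / (1 + (m.2.1 : ℝ) ^ 2) *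
          (1 / (1 + (m.2.2 : ℝ) ^ 2))) := by
  classical
  set q : ℝ := (p : ℝ) ^ n with hq
  have hp1 : (1 : ℝ) ≤ p := by exact_mod_cast hp.out.one_le
  have hq1 : 1 ≤ q := one_le_pow₀ hp1
  have hq0 : 0 < q := by linarith
  set U := unitZeroSum p n α₁ α₂ α₃ with hU
  let v (k : ℤ) : ℝ := 1 / (1 + (k : ℝ) ^ 2)
  have hv0 (k : ℤ) : 0 ≤ v k := by positivity
  have hv := summable_one_div_one_add_int_sq
  have hV : Summable fun m : ℤ × ℤ × ℤ => v m.1 * (v m.2.1 * v m.2.2) :=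
    hv.mul_of_nonneg (hv.mul_of_nonneg hv hv0 hv0) hv0 fun m => mul_nonneg (hv0 _) (hv0 _)
  let T (m : ℤ × ℤ × ℤ) : ℂ := w m.1 * w m.2.1 * w m.2.2 * U m
  have hUm (m : ℤ × ℤ × ℤ) : ‖U m‖ ≤ ‖U 0‖ := norm_unitZeroSum_le n m
  have hws : Summable fun k => ‖w k‖ :=
    Summable.of_nonneg_of_le (fun _ => norm_nonneg _) hw' (hv.mul_left _)
  have hT : Summable T := by
    refine Summable.of_norm (Summable.of_nonneg_of_le (fun _ => norm_nonneg _) (fun m => ?_)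
      ((summable_norm_mul_three hws hws hws).mul_right ‖U 0‖))
    rw [norm_mul]
    gcongr
    exact hUm m
  let S : Finset (ℤ × ℤ × ℤ) := (Finset.Icc (-R : ℤ) R ×ˢ Finset.Icc (-R : ℤ) R ×ˢ
    Finset.Icc (-R : ℤ) R).erase 0
  have hS (m : ℤ × ℤ × ℤ) : m ∈ S ↔ m ≠ 0 ∧ |m.1| ≤ R ∧ |m.2.1| ≤ R ∧ |m.2.2| ≤ R := by
    simp only [S, Finset.mem_erase, Finset.mem_product, Finset.mem_Icc, abs_le]
  have hfar3 {a b c : ℤ} (ha : (R : ℤ) < |a|) :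
      ‖w a‖ * ‖w b‖ * ‖w c‖ ≤ C ^ 3 / q * (v a * (v b * v c)) := by
    calc ‖w a‖ * ‖w b‖ * ‖w c‖ ≤ (C / q ^ 3 * v a) * (C * q * v b) * (C * q * v c) := by
          gcongr
          exacts [hfar a ha, hw' b, hw' c]
      _ = _ := by field_simp
  have hbound (m : ℤ × ℤ × ℤ) : ‖if m = 0 then 0 else T m‖ ≤
      (if m ∈ S then C ^ 3 * ‖U m‖ else 0) +
        C ^ 3 / q * ‖U 0‖ * (v m.1 * (v m.2.1 * v m.2.2)) := by
    have hV0 : 0 ≤ v m.1 * (v m.2.1 * v m.2.2) :=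
      mul_nonneg (hv0 _) (mul_nonneg (hv0 _) (hv0 _))
    by_cases hm0 : m = 0
    · have : m ∉ S := fun h => ((hS m).mp h).1 hm0
      rw [if_pos hm0, if_neg this, norm_zero, zero_add]
      positivity
    rw [if_neg hm0]
    by_cases hm : m ∈ S
    · rw [if_pos hm]
      refine le_add_of_le_of_nonneg ?_ (by positivity)
      simp only [T, norm_mul]
      calc ‖w m.1‖ * ‖w m.2.1‖ * ‖w m.2.2‖ * ‖U m‖ ≤ C * C * C * ‖U m‖ := by
            gcongr
            exacts [hw _, hw _, hw _]
        _ = _ := by ring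
    · rw [if_neg hm, zero_add]
      have hprod : ‖w m.1‖ * ‖w m.2.1‖ * ‖w m.2.2‖ ≤ C ^ 3 / q * (v m.1 * (v m.2.1 * v m.2.2)) := by
        have : (R : ℤ) < |m.1| ∨ (R : ℤ) < |m.2.1| ∨ (R : ℤ) < |m.2.2| := by
          by_contra! h
          exact hm ((hS m).mpr ⟨hm0, h⟩)
        rcases this with h | h | h
        · exact hfar3 h
        · calc _ = ‖w m.2.1‖ * ‖w m.1‖ * ‖w m.2.2‖ := by ring
            _ ≤ _ := hfar3 h
            _ = _ := by ring
        · calc _ = ‖w m.2.2‖ * ‖w m.1‖ * ‖w m.2.1‖ := by ring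
            _ ≤ _ := hfar3 h
            _ = _ := by ring
      simp only [T, norm_mul]
      calc _ ≤ C ^ 3 / q * (v m.1 * (v m.2.1 * v m.2.2)) * ‖U 0‖ := by
            gcongr
            exact hUm m
        _ = _ := by ring
  have hnear : HasSum (fun m => if m ∈ S then C ^ 3 * ‖U m‖ else 0) (∑ m ∈ S, C ^ 3 * ‖U m‖) := by
    have := hasSum_sum_of_ne_finset_zero (f := fun m => if m ∈ S then C ^ 3 * ‖U m‖ else 0)
      (s := S) (L := SummationFilter.unconditional _) fun m hm => if_neg hm
    rwa [Finset.sum_congr rfl fun m hm => if_pos hm] at this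
  have hle := tsum_of_norm_bounded (hnear.add (hV.hasSum.mul_left (C ^ 3 / q * ‖U 0‖))) hbound
  have hsplit : ∑' m, T m - w 0 ^ 3 * U 0 = ∑' m, if m = 0 then 0 else T m := by
    rw [hT.tsum_eq_add_tsum_ite 0]
    simp only [T, Prod.fst_zero, Prod.snd_zero]
    ring
  rw [hsplit]
  refine hle.trans (add_le_add_left ?_ _)
  rw [← Finset.mul_sum]
  exact mul_le_mul_of_nonneg_left (sum_norm_unitZeroSum_le hp2 h1 h2 h3 hR S fun m hm =>
    (hS m).mp hm) (by positivity)

end ErrorTerm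

section Asymptotics

variable {α₁ α₂ α₃ : ℤ}

lemma floor_mul_log_mul_pow_le {ε : ℝ} (hε : 0 < ε) (n : ℕ) {R : ℕ}
    (hR : (R : ℝ) ≤ ((p : ℝ) ^ n) ^ (1 / 2 - ε / 2)) :
    n * R * (1 + Real.log R) * (p : ℝ) ^ (2 * n - n / 2) ≤
      p * ((p : ℝ) ^ n) ^ 2 * (n * (1 + n * Real.log p) * ((p : ℝ) ^ (-(ε / 2))) ^ n) := by
  have hp1 : (1 : ℝ) ≤ p := by exact_mod_cast hp.out.one_le
  have hp0 : (0 : ℝ) < p := by linarith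
  have hq1 : (1 : ℝ) ≤ (p : ℝ) ^ n := one_le_pow₀ hp1
  have hlogp : 0 ≤ Real.log p := Real.log_natCast_nonneg p
  have hlog : Real.log R ≤ n * Real.log p := by
    rcases Nat.eq_zero_or_pos R with rfl | hR0
    · simp only [Nat.cast_zero, Real.log_zero]
      positivity
    · rw [← Real.log_pow]
      refine Real.log_le_log (by exact_mod_cast hR0) (hR.trans ?_)
      calc ((p : ℝ) ^ n) ^ (1 / 2 - ε / 2) ≤ ((p : ℝ) ^ n) ^ (1 : ℝ) :=
            Real.rpow_le_rpow_of_exponent_le hq1 (by linarith)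
        _ = _ := Real.rpow_one _
  have hpow : ((p : ℝ) ^ n) ^ (1 / 2 - ε / 2) * (p : ℝ) ^ (2 * n - n / 2) ≤
      p * ((p : ℝ) ^ n) ^ 2 * ((p : ℝ) ^ (-(ε / 2))) ^ n := by
    have hhalf : ((n / 2 : ℕ) : ℝ) + 1 ≥ n / 2 := by
      have : n ≤ 2 * (n / 2) + 1 := by omega
      have : (n : ℝ) ≤ 2 * (n / 2 : ℕ) + 1 := by exact_mod_cast this
      linarith
    have hsub : ((2 * n - n / 2 : ℕ) : ℝ) = 2 * n - (n / 2 : ℕ) := by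
      rw [Nat.cast_sub (by omega)]
      push_cast
      rfl
    have hleft : ((p : ℝ) ^ n) ^ (1 / 2 - ε / 2) * (p : ℝ) ^ (2 * n - n / 2) =
        (p : ℝ) ^ (n * (1 / 2 - ε / 2) + (2 * n - (n / 2 : ℕ))) := by
      rw [← Real.rpow_natCast, ← Real.rpow_natCast, ← Real.rpow_mul hp0.le, ← Real.rpow_add hp0,
        hsub]
    have hright : p * ((p : ℝ) ^ n) ^ 2 * ((p : ℝ) ^ (-(ε / 2))) ^ n =
        (p : ℝ) ^ (1 + n * 2 + -(ε / 2) * n) := by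
      rw [Real.rpow_add hp0, Real.rpow_add hp0, Real.rpow_one, Real.rpow_mul hp0.le,
        Real.rpow_mul hp0.le, Real.rpow_natCast, Real.rpow_natCast, Real.rpow_ofNat]
    rw [hleft, hright]
    exact Real.rpow_le_rpow_of_exponent_le hp1 (by linarith)
  have hlog0 := Real.log_natCast_nonneg R
  calc n * R * (1 + Real.log R) * (p : ℝ) ^ (2 * n - n / 2)
      ≤ n * ((p : ℝ) ^ n) ^ (1 / 2 - ε / 2) * (1 + n * Real.log p) *
          (p : ℝ) ^ (2 * n - n / 2) := by gcongr
    _ = n * (1 + n * Real.log p) *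
          (((p : ℝ) ^ n) ^ (1 / 2 - ε / 2) * (p : ℝ) ^ (2 * n - n / 2)) := by ring
    _ ≤ n * (1 + n * Real.log p) *
          (p * ((p : ℝ) ^ n) ^ 2 * ((p : ℝ) ^ (-(ε / 2))) ^ n) := by gcongr
    _ = _ := by ring

lemma eventually_height_mul_floor_sq_lt {ε : ℝ} (hε : 0 < ε) (A : ℕ) :
    ∀ᶠ n : ℕ in atTop, A * ⌊((p : ℝ) ^ n) ^ (1 / 2 - ε / 2)⌋₊ ^ 2 < p ^ (n - 1) := by
  have hp1 : (1 : ℝ) < p := by exact_mod_cast hp.out.one_lt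
  have hp0 : (0 : ℝ) < p := by linarith
  have htend : Tendsto (fun n : ℕ => ((p : ℝ) ^ ε) ^ n) atTop atTop :=
    tendsto_pow_atTop_atTop_of_one_lt (Real.one_lt_rpow hp1 hε)
  filter_upwards [htend.eventually_gt_atTop (A * p : ℝ), eventually_ne_atTop 0] with n hn hn0
  have hq0 : (0 : ℝ) < (p : ℝ) ^ n := by positivity
  have hfloor := Nat.floor_le (Real.rpow_nonneg hq0.le (1 / 2 - ε / 2))
  set R := ⌊((p : ℝ) ^ n) ^ (1 / 2 - ε / 2)⌋₊
  have hswap : ((p : ℝ) ^ ε) ^ n = ((p : ℝ) ^ n) ^ ε := by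
    rw [← Real.rpow_natCast, ← Real.rpow_natCast, ← Real.rpow_mul hp0.le, ← Real.rpow_mul hp0.le,
      mul_comm]
  have hsq : (((p : ℝ) ^ n) ^ (1 / 2 - ε / 2)) ^ 2 * ((p : ℝ) ^ n) ^ ε = (p : ℝ) ^ n := by
    rw [← Real.rpow_natCast _ 2, ← Real.rpow_mul hq0.le, ← Real.rpow_add hq0]
    convert Real.rpow_one _ using 2
    push_cast
    ring
  have hlt : (A : ℝ) * R ^ 2 * p < (p : ℝ) ^ (n - 1) * p := by
    calc (A : ℝ) * R ^ 2 * p ≤ (((p : ℝ) ^ n) ^ (1 / 2 - ε / 2)) ^ 2 * (A * p) := by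
          rw [mul_right_comm, mul_comm]
          gcongr
      _ < (((p : ℝ) ^ n) ^ (1 / 2 - ε / 2)) ^ 2 * ((p : ℝ) ^ n) ^ ε := by
          rw [← hswap]
          gcongr
      _ = (p : ℝ) ^ (n - 1) * p := by rw [hsq, ← pow_succ, Nat.sub_add_cancel (by omega)]
  exact_mod_cast lt_of_mul_lt_mul_right hlt hp0.le

lemma tendsto_mul_one_add_mul_pow_zero {r : ℝ} (hr0 : 0 ≤ r) (hr : r < 1) (c : ℝ) :
    Tendsto (fun n : ℕ => n * (1 + n * c) * r ^ n) atTop (nhds 0) := by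
  have h1 := tendsto_pow_const_mul_const_pow_of_abs_lt_one 1 (r := r) (by rwa [abs_of_nonneg hr0])
  have h2 := tendsto_pow_const_mul_const_pow_of_abs_lt_one 2 (r := r) (by rwa [abs_of_nonneg hr0])
  have h := h1.add (h2.const_mul c)
  rw [mul_zero, add_zero] at h
  refine h.congr fun n => ?_
  ring

end Asymptotics

end PrimePower

/-- For fixed coefficients, the smoothed count of unit solutions of
`α₁x₁² + α₂x₂² + α₃x₃² ≡ 0 (mod pⁿ)`, normalized by `q/N³`, converges to
`Φ̂(0)³ · C_p(α₁,α₂,α₃)` as `n → ∞`, provided `N ≥ q^{1/2+ε}`. -/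
theorem smoothed_count_fixed_coefficients
    (ε : ℝ) (hε : 0 < ε) (p : ℕ) [hp : Fact p.Prime] (hp2 : 2 < p)
    (α₁ α₂ α₃ : ℤ)
    (h1 : ¬ (p : ℤ) ∣ α₁) (h2 : ¬ (p : ℤ) ∣ α₂) (h3 : ¬ (p : ℤ) ∣ α₃)
    (hs : (2 + legendreSym p (-(α₁ * α₂)) + legendreSym p (-(α₁ * α₃))
            + legendreSym p (-(α₂ * α₃))) < (p : ℤ))
    (Φ : SchwartzMap ℝ ℝ) (hΦ : ∀ x, 0 ≤ Φ x)
    (N : ℕ → ℝ) (hN : ∀ n : ℕ, ((p : ℝ) ^ n) ^ ((1 : ℝ) / 2 + ε) ≤ N n) :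
    Tendsto (fun n : ℕ =>
        ((p : ℝ) ^ n / (N n) ^ 3) *
          ∑' x : ℤ × ℤ × ℤ,
            (if Int.gcd (x.1 * x.2.1 * x.2.2) p = 1 ∧
                (p : ℤ) ^ n ∣ α₁ * x.1 ^ 2 + α₂ * x.2.1 ^ 2 + α₃ * x.2.2 ^ 2
             then Φ ((x.1 : ℝ) / N n) * Φ ((x.2.1 : ℝ) / N n) * Φ ((x.2.2 : ℝ) / N n)
             else 0))
      atTop
      (nhds ((∫ x : ℝ, Φ x) ^ 3 *
        (((p : ℝ) - ((2 + legendreSym p (-(α₁ * α₂)) + legendreSym p (-(α₁ * α₃))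
            + legendreSym p (-(α₂ * α₃)) : ℤ) : ℝ)) * ((p : ℝ) - 1) / (p : ℝ) ^ 2))) := by
  set κ : ℝ := (((p : ℝ) - ((2 + legendreSym p (-(α₁ * α₂)) + legendreSym p (-(α₁ * α₃))
    + legendreSym p (-(α₂ * α₃)) : ℤ) : ℝ)) * ((p : ℝ) - 1) / (p : ℝ) ^ 2) with hκ
  have hp1 : (1 : ℝ) < p := by exact_mod_cast hp.out.one_lt
  have hp0 : (0 : ℝ) < p := by linarith
  let f : 𝓢(ℝ, ℂ) := Φ.postcompCLM Complex.ofRealCLM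
  have hf (x : ℝ) : f x = (Φ x : ℂ) := rfl
  have hf0 : 𝓕 f 0 = ((∫ x : ℝ, Φ x : ℝ) : ℂ) := by
    rw [SchwartzMap.fourier_coe, Real.fourier_real_eq_integral_exp_smul, ← integral_complex_ofReal]
    simp [hf]
  obtain ⟨C, hC, hdecay⟩ := (𝓕 f).exists_decay_on_lattice hε
  set A := dualHeight α₁ α₂ α₃ with hA
  set V : ℝ := ∑' m : ℤ × ℤ × ℤ, 1 / (1 + (m.1 : ℝ) ^ 2) * (1 / (1 + (m.2.1 : ℝ) ^ 2) *
    (1 / (1 + (m.2.2 : ℝ) ^ 2))) with hV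
  let E (n : ℕ) : ℝ := C ^ 3 * (16 * p * A) * p *
    (n * (1 + n * Real.log p) * ((p : ℝ) ^ (-(ε / 2))) ^ n) + C ^ 3 * |κ| * V * ((p : ℝ)⁻¹) ^ n
  have hE : Tendsto E atTop (nhds 0) := by
    have hr : (p : ℝ) ^ (-(ε / 2)) < 1 := Real.rpow_lt_one_of_one_lt_of_neg hp1 (by linarith)
    have h := ((tendsto_mul_one_add_mul_pow_zero (Real.rpow_nonneg hp0.le _) hr
      (Real.log p)).const_mul (C ^ 3 * (16 * p * A) * p)).add
      ((tendsto_pow_atTop_nhds_zero_of_lt_one (inv_nonneg.mpr hp0.le)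
        (inv_lt_one_of_one_lt₀ hp1)).const_mul (C ^ 3 * |κ| * V))
    simpa only [mul_zero, add_zero] using h
  rw [tendsto_iff_norm_sub_tendsto_zero]
  refine squeeze_zero' (Eventually.of_forall fun n => norm_nonneg _) ?_ hE
  filter_upwards [eventually_height_mul_floor_sq_lt (p := p) hε A, eventually_ne_atTop 0]
    with n hn hn0
  have hq1 : (1 : ℝ) ≤ (p : ℝ) ^ n := one_le_pow₀ hp1.le
  have hq0 : (0 : ℝ) < (p : ℝ) ^ n := by positivity
  have hN0 : 0 < N n := lt_of_lt_of_le (Real.rpow_pos_of_pos hq0 _) (hN n)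
  have hρ : ((p : ℝ) ^ n) ^ (-(1 / 2) + ε) ≤ N n / (p : ℝ) ^ n := by
    rw [le_div_iff₀ hq0]
    refine le_trans (le_of_eq ?_) (hN n)
    rw [← Real.rpow_add_one hq0.ne']
    congr 1
    ring
  set R := ⌊((p : ℝ) ^ n) ^ (1 / 2 - ε / 2)⌋₊ with hR
  let w (k : ℤ) : ℂ := 𝓕 f (N n / (p : ℝ) ^ n * k)
  have hw0 : w 0 = ((∫ x : ℝ, Φ x : ℝ) : ℂ) := by simpa [w] using hf0
  set U := unitZeroSum p n α₁ α₂ α₃ with hU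
  have hU0 : U 0 / ((p : ℂ) ^ n) ^ 2 = (κ : ℂ) := unitZeroSum_zero_div hn0 hp2 h1 h2 h3
  have hmain := norm_tsum_mul_unitZeroSum_sub_le hp2 h1 h2 h3 hn hC (w := w)
    (fun k => (hdecay _ _ hq1 hρ k).1) (fun k => (hdecay _ _ hq1 hρ k).2.1)
    (fun k hk => (hdecay _ _ hq1 hρ k).2.2 (by
      have hk' : ((R + 1 : ℕ) : ℝ) ≤ |(k : ℝ)| := by exact_mod_cast hk
      push_cast at hk'
      exact (Nat.lt_floor_add_one _).le.trans hk'))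
  have hcount := smoothed_count_eq_tsum_unitZeroSum (p := p) (α₁ := α₁) (α₂ := α₂) (α₃ := α₃) f
    hn0 hN0
  set X : ℝ := ∑' x : ℤ × ℤ × ℤ, (if Int.gcd (x.1 * x.2.1 * x.2.2) p = 1 ∧
      (p : ℤ) ^ n ∣ α₁ * x.1 ^ 2 + α₂ * x.2.1 ^ 2 + α₃ * x.2.2 ^ 2
    then Φ ((x.1 : ℝ) / N n) * Φ ((x.2.1 : ℝ) / N n) * Φ ((x.2.2 : ℝ) / N n) else 0) with hX
  have hXC : (X : ℂ) = ((N n / (p : ℝ) ^ n : ℝ) : ℂ) ^ 3 *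
      ∑' m : ℤ × ℤ × ℤ, w m.1 * w m.2.1 * w m.2.2 * U m := by
    rw [← hcount, hX, Complex.ofReal_tsum]
    refine tsum_congr fun x => ?_
    split_ifs
    · push_cast [hf]
      rfl
    · exact Complex.ofReal_zero
  have hpC : (p : ℂ) ≠ 0 := by exact_mod_cast hp0.ne'
  have hNC : (N n : ℂ) ≠ 0 := by exact_mod_cast hN0.ne'
  have hdiff : (((p : ℝ) ^ n / N n ^ 3 * X - (∫ x : ℝ, Φ x) ^ 3 * κ : ℝ) : ℂ) =
      (∑' m : ℤ × ℤ × ℤ, w m.1 * w m.2.1 * w m.2.2 * U m - w 0 ^ 3 * U 0) /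
        ((p : ℂ) ^ n) ^ 2 := by
    push_cast
    rw [hXC, ← hU0, hw0]
    push_cast
    field_simp
  have hU0norm : ‖U 0‖ = |κ| * ((p : ℝ) ^ n) ^ 2 := by
    rw [div_eq_iff (by positivity)] at hU0
    rw [hU0, norm_mul, Complex.norm_real, Real.norm_eq_abs]
    simp
  rw [← Complex.norm_real, hdiff, norm_div, norm_pow, norm_pow, Complex.norm_natCast,
    div_le_iff₀ (by positivity)]
  refine hmain.trans ?_
  have hnum := floor_mul_log_mul_pow_le hε n (Nat.floor_le (Real.rpow_nonneg hq0.le (1 / 2 - ε / 2)))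
  rw [← hR] at hnum
  rw [hU0norm]
  calc C ^ 3 * (16 * p * A * n * R * (1 + Real.log R) * (p : ℝ) ^ (2 * n - n / 2)) +
        C ^ 3 / (p : ℝ) ^ n * (|κ| * ((p : ℝ) ^ n) ^ 2) * V
      = C ^ 3 * (16 * p * A) * (n * R * (1 + Real.log R) * (p : ℝ) ^ (2 * n - n / 2)) +
        C ^ 3 * |κ| * V * ((p : ℝ)⁻¹) ^ n * ((p : ℝ) ^ n) ^ 2 := by
        rw [inv_pow]
        ring
    _ ≤ C ^ 3 * (16 * p * A) * (p * ((p : ℝ) ^ n) ^ 2 *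
          (n * (1 + n * Real.log p) * ((p : ℝ) ^ (-(ε / 2))) ^ n)) +
        C ^ 3 * |κ| * V * ((p : ℝ)⁻¹) ^ n * ((p : ℝ) ^ n) ^ 2 := by
        gcongr
    _ = _ := by
        dsimp only [E]
        ring
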